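/- arXiv:1104.5066 — 14 statements merged into one kernel-verified Lean document; each statement's English description precedes it below -/
import Mathlib

section
/- Let μ ∈ ℂ, let ν be a nonzero real number, and let d ∈ ℂ, and assume 2μ−1+2iν ≠ 0 and 2μ−1−2iν ≠ 0. Then for every integer k, g vanishes at the point t_k(1) := −(d + kπ)/ν, and g also vanishes at the point t_k(2) := t_k(1) − (i/ν)·Log((2μ−1+2iν)/(2μ−1−2iν)), where Log denotes the principal branch of the complex logarithm. (These points are t = log x evaluated at the two sequences of zeros x_k(1), x_k(2) of y₁ accumulating at x = 0.) -/
open Complex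

/-- The leading term `y₁` of the inverse of a Painlevé VI transcendent, written in the
variable `t = log x`, so that `x^{±2iν} = exp(±2iνt)`. -/
noncomputable def g (μ : ℂ) (ν : ℝ) (d : ℂ) (t : ℂ) : ℂ :=
  (2*μ - 1 + 2*I*(ν:ℂ))^2 / (16*(ν:ℂ)^2) * Complex.exp (-(2*I*d)) *
      Complex.exp (-(2*I*(ν:ℂ)*t))
    - ((2*μ - 1)^2 - 4*(ν:ℂ)^2) / (8*(ν:ℂ)^2)
    + (2*μ - 1 - 2*I*(ν:ℂ))^2 / (16*(ν:ℂ)^2) * Complex.exp (2*I*d) *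
        Complex.exp (2*I*(ν:ℂ)*t)

theorem g_eq_zero_aux (μ : ℂ) (ν : ℝ) (hν : ν ≠ 0) (d t w : ℂ)
    (hw : Complex.exp (2*I*d + 2*I*(ν:ℂ)*t) = w)
    (h : (2*μ - 1 + 2*I*(ν:ℂ))^2 * w⁻¹ - ((2*μ - 1 + 2*I*(ν:ℂ))^2 + (2*μ - 1 - 2*I*(ν:ℂ))^2)
      + (2*μ - 1 - 2*I*(ν:ℂ))^2 * w = 0) : g μ ν d t = 0 := by
  have hn : (ν:ℂ) ≠ 0 := by exact_mod_cast hν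
  have e1 : Complex.exp (2*I*d) * Complex.exp (2*I*(ν:ℂ)*t) = w := by
    rw [← Complex.exp_add, hw]
  have e2 : Complex.exp (-(2*I*d)) * Complex.exp (-(2*I*(ν:ℂ)*t)) = w⁻¹ := by
    rw [Complex.exp_neg, Complex.exp_neg, ← mul_inv, e1]
  have e3 : ((2*μ - 1)^2 - 4*(ν:ℂ)^2) / (8*(ν:ℂ)^2)
      = ((2*μ - 1 + 2*I*(ν:ℂ))^2 + (2*μ - 1 - 2*I*(ν:ℂ))^2) / (16*(ν:ℂ)^2) := by
    rw [div_eq_div_iff (by simp [hn]) (by simp [hn])]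
    linear_combination (-64 * (ν:ℂ)^4) * Complex.I_sq
  unfold g
  rw [mul_assoc, mul_assoc (_ / _) (Complex.exp (2*I*d)), e1, e2, e3]
  linear_combination h / (16*(ν:ℂ)^2)

/-- `g` vanishes at `t_k(1) = −(d + kπ)/ν` and at
`t_k(2) = t_k(1) − (i/ν)·Log((2μ−1+2iν)/(2μ−1−2iν))` for every integer `k`. -/
theorem stmt_1 (μ : ℂ) (ν : ℝ) (hν : ν ≠ 0) (d : ℂ)
    (h1 : 2*μ - 1 + 2*I*(ν:ℂ) ≠ 0) (h2 : 2*μ - 1 - 2*I*(ν:ℂ) ≠ 0) :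
    ∀ k : ℤ,
      g μ ν d (-((d + (k:ℂ)*(Real.pi:ℂ)) / (ν:ℂ))) = 0 ∧
      g μ ν d (-((d + (k:ℂ)*(Real.pi:ℂ)) / (ν:ℂ))
        - (I/(ν:ℂ)) * Complex.log ((2*μ - 1 + 2*I*(ν:ℂ)) / (2*μ - 1 - 2*I*(ν:ℂ)))) = 0 := by
  intro k
  have hn : (ν:ℂ) ≠ 0 := by exact_mod_cast hν
  have hk : Complex.exp (-((k:ℂ) * (2 * Real.pi * I))) = 1 := by
    rw [Complex.exp_neg, Complex.exp_int_mul_two_pi_mul_I, inv_one]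
  constructor
  · apply g_eq_zero_aux μ ν hν d _ 1
    · rw [← hk]
      congr 1
      field_simp
      ring
    · rw [inv_one]
      ring
  · apply g_eq_zero_aux μ ν hν d _
      (((2*μ - 1 + 2*I*(ν:ℂ)) / (2*μ - 1 - 2*I*(ν:ℂ)))^2)
    · have hL := Complex.exp_log (div_ne_zero h1 h2)
      generalize Complex.log ((2*μ - 1 + 2*I*(ν:ℂ)) / (2*μ - 1 - 2*I*(ν:ℂ))) = L at hL ⊢
      rw [← hL, ← Complex.exp_nat_mul, ← one_mul (Complex.exp (((2:ℕ):ℂ) * L)), ← hk,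
        ← Complex.exp_add]
      congr 1
      push_cast
      field_simp
      linear_combination (-L) * Complex.I_sq
    · generalize 2*μ - 1 + 2*I*(ν:ℂ) = A at h1 ⊢
      generalize 2*μ - 1 - 2*I*(ν:ℂ) = B at h2 ⊢
      field_simp
      ring
end

section
/- Let G := (1+√5)/2 be the golden ratio, set ν := (2/π)·ln G (a real number), and define the complex number Z := −π²·((G⁴+1)²/(G²+1)²)·2^{16iν}·ν²·((1−2iν)²/(1+2iν)²)·Γ(1−2iν)⁴/Γ(1−iν)⁸, where Γ is the complex Gamma function and 2^{16iν} = exp(16iν·ln 2). Then ‖Z‖ = G². Consequently the integration constant d = (i/2)·log Z of the Painlevé VI branch associated to the quantum cohomology of CP² satisfies Im d = πν/2 (for any branch of the logarithm, since Im((i/2)·log Z) = (1/2)·ln‖Z‖). -/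
open Complex

lemma norm_Gamma_aux (y : ℝ) (hy : y ≠ 0) :
    ‖Complex.Gamma (1 - I*(y:ℂ))‖^2 = Real.pi * y / Real.sinh (Real.pi * y) := by
  have hyc : (y:ℂ) ≠ 0 := by exact_mod_cast hy
  have hIy : I * (y:ℂ) ≠ 0 := mul_ne_zero I_ne_zero hyc
  have h1 := Complex.Gamma_mul_Gamma_one_sub (I * (y:ℂ))
  have h2 := Complex.Gamma_add_one (I * (y:ℂ)) hIy
  have h3 := Complex.Gamma_conj (1 - I*(y:ℂ))
  have h4 : (starRingEnd ℂ) (1 - I*(y:ℂ)) = I * y + 1 := by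
    simp; ring
  rw [h4] at h3
  have h5 : Complex.sin (Real.pi * (I * y)) = Complex.sinh (Real.pi * y) * I := by
    rw [← Complex.sin_mul_I]; congr 1; ring
  rw [h5] at h1
  have h6 := Complex.mul_conj' (Complex.Gamma (1 - I*(y:ℂ)))
  have hs : Real.sinh (Real.pi * y) ≠ 0 := by
    rw [Ne, Real.sinh_eq_zero]
    exact mul_ne_zero Real.pi_ne_zero hy
  have hsc : Complex.sinh (Real.pi * y) ≠ 0 := by exact_mod_cast hs
  have h7 : ((‖Complex.Gamma (1 - I*(y:ℂ))‖ : ℂ))^2 = Real.pi * y / Complex.sinh (Real.pi * y) := by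
    rw [← h6, ← h3, h2]
    calc _ = I * y * (Complex.Gamma (I * y) * Complex.Gamma (1 - I * y)) := by ring
      _ = _ := by
        rw [h1]
        field_simp
  exact_mod_cast h7

/-- with `G` the golden ratio, `ν = (2/π)·ln G`, and
`Z = −π²·((G⁴+1)²/(G²+1)²)·2^{16iν}·ν²·((1−2iν)²/(1+2iν)²)·Γ(1−2iν)⁴/Γ(1−iν)⁸`,
one has `‖Z‖ = G²`; consequently `d = (i/2)·log Z` satisfies `Im d = πν/2`. -/
theorem stmt_4 (G : ℝ) (hG : G = (1 + Real.sqrt 5)/2)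
    (ν : ℝ) (hν : ν = (2/Real.pi) * Real.log G)
    (Z : ℂ)
    (hZ : Z = -(Real.pi:ℂ)^2 * (((G:ℂ)^4 + 1)^2 / ((G:ℂ)^2 + 1)^2) *
        Complex.exp (16*I*(ν:ℂ)*(Real.log 2 : ℂ)) * (ν:ℂ)^2 *
        ((1 - 2*I*(ν:ℂ))^2 / (1 + 2*I*(ν:ℂ))^2) *
        Complex.Gamma (1 - 2*I*(ν:ℂ))^4 / Complex.Gamma (1 - I*(ν:ℂ))^8) :
    ‖Z‖ = G^2 ∧ ((I/2) * Complex.log Z).im = Real.pi * ν / 2 := by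
  have hsq : G^2 = G + 1 := by
    rw [hG]; nlinarith [Real.sq_sqrt (show (0:ℝ) ≤ 5 by norm_num)]
  have hG1 : 1 < G := by
    have : (1:ℝ) < Real.sqrt 5 := by
      rw [Real.lt_sqrt] <;> norm_num
    linarith
  have hG0 : 0 < G := by linarith
  have hlog : 0 < Real.log G := Real.log_pos hG1
  have hpi := Real.pi_pos
  have hpn : Real.pi * ν = 2 * Real.log G := by rw [hν]; field_simp
  have hνpos : 0 < ν := by rw [hν]; positivity
  have hexp : Real.exp (Real.pi * ν) = G^2 := by
    rw [hpn, two_mul, Real.exp_add, Real.exp_log hG0]; ring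
  have hsinh : Real.sinh (Real.pi * ν) = (G^4 - 1) / (2 * G^2) := by
    rw [Real.sinh_eq, Real.exp_neg, hexp]; field_simp
  have hcosh : Real.cosh (Real.pi * ν) = (G^4 + 1) / (2 * G^2) := by
    rw [Real.cosh_eq, Real.exp_neg, hexp]; field_simp
  have g1 := norm_Gamma_aux ν hνpos.ne'
  have g2 := norm_Gamma_aux (2*ν) (by positivity)
  rw [show Real.pi * (2*ν) = 2 * (Real.pi * ν) by ring, Real.sinh_two_mul] at g2
  rw [show (1 - I * ((2*ν : ℝ):ℂ)) = 1 - 2 * I * ν by push_cast; ring] at g2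
  have e1 : ‖Complex.exp (16*I*(ν:ℂ)*(Real.log 2 : ℂ))‖ = 1 := by
    rw [show 16*I*(ν:ℂ)*(Real.log 2 : ℂ) = ((16 * ν * Real.log 2 : ℝ) : ℂ) * I by push_cast; ring]
    exact Complex.norm_exp_ofReal_mul_I _
  have e2 : ‖1 - 2*I*(ν:ℂ)‖ = ‖1 + 2*I*(ν:ℂ)‖ := by
    rw [← Complex.norm_conj]; congr 1; simp [Complex.conj_ofNat]
  have e2' : ‖1 + 2*I*(ν:ℂ)‖ ≠ 0 := by
    rw [norm_ne_zero_iff]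
    intro h
    have := congrArg Complex.re h
    simp at this
  have e3 : ‖(G:ℂ)^4 + 1‖ = G^4 + 1 := by
    rw [show (G:ℂ)^4 + 1 = ((G^4+1 : ℝ):ℂ) by push_cast; ring, Complex.norm_of_nonneg (by positivity)]
  have e4 : ‖(G:ℂ)^2 + 1‖ = G^2 + 1 := by
    rw [show (G:ℂ)^2 + 1 = ((G^2+1 : ℝ):ℂ) by push_cast; ring, Complex.norm_of_nonneg (by positivity)]
  have hG4 : 0 < G^4 - 1 := by nlinarith
  have hN : ‖Z‖ = G^2 := by
    rw [hZ]
    simp only [norm_mul, norm_div, norm_pow, norm_neg, e1, e2, e3, e4]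
    rw [Complex.norm_of_nonneg hpi.le, Complex.norm_of_nonneg hνpos.le,
      show ‖Complex.Gamma (1 - 2*I*(ν:ℂ))‖^4 = (‖Complex.Gamma (1 - 2*I*(ν:ℂ))‖^2)^2 by ring,
      show ∀ x : ℝ, x^8 = (x^2)^4 from fun x => by ring, g1, g2, hsinh, hcosh,
      div_self (pow_ne_zero 2 e2')]
    have hk : G^4 - 1 = G * (G^2+1) := by
      rw [show G^4 - 1 = (G^2 - 1) * (G^2+1) by ring]; rw [hsq]; ring
    rw [hk]
    field_simp
    try ring
  refine ⟨hN, ?_⟩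
  have : ((I/2) * Complex.log Z).im = Real.log ‖Z‖ / 2 := by
    rw [← Complex.log_re, show I/2 * Complex.log Z = ((1/2 : ℝ):ℂ) * (I * Complex.log Z) by
      push_cast; ring, Complex.im_ofReal_mul]
    simp; ring
  rw [this, hN, Real.log_pow, hpn]
  norm_num
end

section
/- For every real number ν, set p := −2·cosh(2πν) and c := −(1/2)·e^{−3πν}·(3e^{5πν} + 4e^{3πν} + 3e^{πν} − e^{6πν} − 3e^{4πν} − 3e^{2πν} − 1). Then 3p² + p³ − 12p(1 + c) + 4c² + 16c + 8 = 0. (Thus the pair (cos(2πμ), p₀ₓ) = (c, p) lies on the cubic curve obtained from the affine cubic surface of Painlevé VI monodromy data by imposing p₀ₓ = p₀₁ = p_{x1} = p; this is the branch of the curve through the point (−1, −2), which contains the quantum cohomology point (1, −7).) -/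
/-- the pair `(c, p)` with `p = −2cosh(2πν)` and
`c = −(1/2)e^{−3πν}(3e^{5πν} + 4e^{3πν} + 3e^{πν} − e^{6πν} − 3e^{4πν} − 3e^{2πν} − 1)`
lies on the cubic curve `3p² + p³ − 12p(1+c) + 4c² + 16c + 8 = 0`. -/
theorem stmt_5 (ν p c : ℝ)
    (hp : p = -2 * Real.cosh (2*Real.pi*ν))
    (hc : c = -(1/2) * Real.exp (-(3*Real.pi*ν)) *
      (3*Real.exp (5*Real.pi*ν) + 4*Real.exp (3*Real.pi*ν) + 3*Real.exp (Real.pi*ν)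
        - Real.exp (6*Real.pi*ν) - 3*Real.exp (4*Real.pi*ν) - 3*Real.exp (2*Real.pi*ν) - 1)) :
    3*p^2 + p^3 - 12*p*(1 + c) + 4*c^2 + 16*c + 8 = 0 := by
  have e : ∀ n : ℕ, Real.exp (n * (Real.pi*ν)) = Real.exp (Real.pi*ν) ^ n :=
    fun n => Real.exp_nat_mul _ n
  have h2 : Real.exp (2*Real.pi*ν) = Real.exp (Real.pi*ν) ^ 2 := by
    rw [← e]; congr 1; push_cast; ring
  have h3 : Real.exp (3*Real.pi*ν) = Real.exp (Real.pi*ν) ^ 3 := by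
    rw [← e]; congr 1; push_cast; ring
  have h4 : Real.exp (4*Real.pi*ν) = Real.exp (Real.pi*ν) ^ 4 := by
    rw [← e]; congr 1; push_cast; ring
  have h5 : Real.exp (5*Real.pi*ν) = Real.exp (Real.pi*ν) ^ 5 := by
    rw [← e]; congr 1; push_cast; ring
  have h6 : Real.exp (6*Real.pi*ν) = Real.exp (Real.pi*ν) ^ 6 := by
    rw [← e]; congr 1; push_cast; ring
  rw [Real.cosh_eq, Real.exp_neg, h2] at hp
  rw [Real.exp_neg, h2, h3, h4, h5, h6] at hc
  have hx : Real.exp (Real.pi*ν) ≠ 0 := Real.exp_ne_zero _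
  generalize Real.exp (Real.pi*ν) = x at *
  rw [hp, hc]
  field_simp
  ring
end

section
/- For every real number ν, set p := −2·cosh(2πν) and c := −(1/2)·e^{−3πν}·(3e^{5πν} + 4e^{3πν} + 3e^{πν} + e^{6πν} + 3e^{4πν} + 3e^{2πν} + 1). Then 3p² + p³ − 12p(1 + c) + 4c² + 16c + 8 = 0. (Thus (cos(2πμ), p₀ₓ) = (c, p) lies on the branch of the cubic curve through the point (−9, −2).) -/
/-- the pair `(c, p)` with `p = −2cosh(2πν)` and
`c = −(1/2)e^{−3πν}(3e^{5πν} + 4e^{3πν} + 3e^{πν} + e^{6πν} + 3e^{4πν} + 3e^{2πν} + 1)`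
lies on the cubic curve `3p² + p³ − 12p(1+c) + 4c² + 16c + 8 = 0`. -/
theorem stmt_6 (ν p c : ℝ)
    (hp : p = -2 * Real.cosh (2*Real.pi*ν))
    (hc : c = -(1/2) * Real.exp (-(3*Real.pi*ν)) *
      (3*Real.exp (5*Real.pi*ν) + 4*Real.exp (3*Real.pi*ν) + 3*Real.exp (Real.pi*ν)
        + Real.exp (6*Real.pi*ν) + 3*Real.exp (4*Real.pi*ν) + 3*Real.exp (2*Real.pi*ν) + 1)) :
    3*p^2 + p^3 - 12*p*(1 + c) + 4*c^2 + 16*c + 8 = 0 := by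
  have hx : Real.exp (Real.pi*ν) ≠ 0 := Real.exp_ne_zero _
  have key : ∀ n : ℕ, Real.exp ((n:ℝ)*Real.pi*ν) = Real.exp (Real.pi*ν) ^ n := by
    intro n
    rw [← Real.exp_nat_mul, mul_assoc]
  have h2 := key 2
  have h3 := key 3
  have h4 := key 4
  have h5 := key 5
  have h6 := key 6
  push_cast at h2 h3 h4 h5 h6
  rw [Real.cosh_eq, Real.exp_neg, h2] at hp
  rw [Real.exp_neg, h2, h3, h4, h5, h6] at hc
  generalize Real.exp (Real.pi*ν) = x at *
  subst hp hc
  field_simp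
  ring
end

section
/- Let G := (1+√5)/2 be the golden ratio. For every real number ν, c₂(ν) ≥ 0 if and only if |ν| ≤ (2/π)·ln G, equivalently if and only if cosh(πν) ≤ 3/2. -/
/-- `c₂(ν) = 96cosh(πν) + 52cosh(3πν) + 12cosh(5πν) − 50 − 78cosh(2πν) − 30cosh(4πν) − 2cosh(6πν)`. -/
noncomputable def c₂ (ν : ℝ) : ℝ :=
  96*Real.cosh (Real.pi*ν) + 52*Real.cosh (3*Real.pi*ν) + 12*Real.cosh (5*Real.pi*ν)
    - 50 - 78*Real.cosh (2*Real.pi*ν) - 30*Real.cosh (4*Real.pi*ν) - 2*Real.cosh (6*Real.pi*ν)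

theorem c2_factor (ν : ℝ) : c₂ ν = 16 * (Real.cosh (Real.pi*ν))^2 * (Real.cosh (Real.pi*ν) - 1)^2
    * (2 * Real.cosh (Real.pi*ν) + 1) * (3 - 2 * Real.cosh (Real.pi*ν)) := by
  unfold c₂
  set y := Real.pi * ν with hy
  have e2 : 2 * Real.pi * ν = 2 * y := by rw [hy]; ring
  have e3 : 3 * Real.pi * ν = 3 * y := by rw [hy]; ring
  have e4 : 4 * Real.pi * ν = 2 * (2 * y) := by rw [hy]; ring
  have e5 : 5 * Real.pi * ν = 3 * y + 2 * y := by rw [hy]; ring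
  have e6 : 6 * Real.pi * ν = 2 * (3 * y) := by rw [hy]; ring
  have hs : ∀ z, Real.sinh z ^ 2 = Real.cosh z ^ 2 - 1 := Real.sinh_sq
  have h2 : ∀ z, Real.cosh (2 * z) = 2 * Real.cosh z ^ 2 - 1 := by
    intro z
    rw [Real.cosh_two_mul, hs]; ring
  have h5 : Real.cosh (3 * y + 2 * y) = 16 * Real.cosh y ^ 5 - 20 * Real.cosh y ^ 3
      + 5 * Real.cosh y := by
    rw [Real.cosh_add, Real.cosh_three_mul, Real.sinh_three_mul, h2, Real.sinh_two_mul]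
    have h4 : Real.sinh y ^ 4 = (Real.cosh y ^ 2 - 1) ^ 2 := by rw [← hs]; ring
    linear_combination (8 * Real.cosh y) * h4 + 6 * Real.cosh y * hs y
  rw [e2, e3, e4, e5, e6, h5, h2 (2 * y), h2 (3 * y), h2 y, Real.cosh_three_mul]
  ring

theorem c2_nonneg_iff (ν : ℝ) : 0 ≤ c₂ ν ↔ Real.cosh (Real.pi*ν) ≤ 3/2 := by
  rw [c2_factor]
  have h1 := Real.one_le_cosh (Real.pi*ν)
  set x := Real.cosh (Real.pi*ν)
  constructor
  · intro h
    by_contra! hx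
    have hp : 0 < 16 * x^2 * (x - 1)^2 * (2 * x + 1) := by
      have : 0 < x - 1 := by linarith
      positivity
    nlinarith
  · intro h
    have : 0 ≤ 3 - 2 * x := by linarith
    positivity

theorem cosh_two_log_golden (G : ℝ) (hG : G = (1 + Real.sqrt 5)/2) :
    1 < G ∧ Real.cosh (2 * Real.log G) = 3/2 := by
  have h5 : Real.sqrt 5 ^ 2 = 5 := Real.sq_sqrt (by norm_num)
  have h1 : 1 < Real.sqrt 5 := by
    rw [Real.lt_sqrt] <;> norm_num
  have hG1 : 1 < G := by rw [hG]; linarith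
  refine ⟨hG1, ?_⟩
  have hG2 : G ^ 2 = G + 1 := by rw [hG]; linear_combination h5 / 4
  have h0 : G ≠ 0 := by positivity
  have e : G⁻¹ = G - 1 := by
    field_simp
    linear_combination -hG2
  have hs := Real.sinh_sq (Real.log G)
  rw [Real.cosh_two_mul, hs, Real.cosh_log (by positivity), e]
  linear_combination 2 * hG2

/-- with `G` the golden ratio, for every real `ν` one has `c₂(ν) ≥ 0`
iff `|ν| ≤ (2/π)·ln G`, equivalently iff `cosh(πν) ≤ 3/2`. -/
theorem stmt_8 (G : ℝ) (hG : G = (1 + Real.sqrt 5)/2) (ν : ℝ) :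
    (0 ≤ c₂ ν ↔ |ν| ≤ (2/Real.pi) * Real.log G) ∧
    (0 ≤ c₂ ν ↔ Real.cosh (Real.pi*ν) ≤ 3/2) := by
  refine ⟨?_, c2_nonneg_iff ν⟩
  obtain ⟨hG1, hc⟩ := cosh_two_log_golden G hG
  have hl : 0 < Real.log G := Real.log_pos hG1
  rw [c2_nonneg_iff, ← hc, Real.cosh_le_cosh, abs_mul, abs_of_pos Real.pi_pos,
    abs_of_pos (by positivity : 0 < 2 * Real.log G), div_mul_eq_mul_div,
    le_div_iff₀ Real.pi_pos, mul_comm]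
end

section
/- As ν → 0⁺ (ν real, positive), the quantity arg( c₁(ν) − (i/2)·√(c₂(ν)) ) / ν² tends to −√3·π², where arg is the principal argument. (Equivalently, the exponent μ = −1/2 + (1/2π)·arg(c₁(ν) − (i/2)√(c₂(ν))) of the real-μ solutions with p₀ₓ = p₀₁ = p_{x1} = −2cosh(2πν) satisfies μ = −1/2 − (π√3/2)·ν² + o(ν²), which is the leading term of the Taylor expansion of μ in ν.) -/
/-- `c₁(ν) = 2 + 3cosh(2πν) − cosh(3πν) − 3cosh(πν)`. -/
noncomputable def c₁ (ν : ℝ) : ℝ :=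
  2 + 3*Real.cosh (2*Real.pi*ν) - Real.cosh (3*Real.pi*ν) - 3*Real.cosh (Real.pi*ν)

lemma aux_c1 (ν : ℝ) : c₁ ν = -1 + 6 * Real.cosh (Real.pi*ν)^2 - 4 * Real.cosh (Real.pi*ν)^3 := by
  unfold c₁
  rw [show 2*Real.pi*ν = 2*(Real.pi*ν) by ring, show 3*Real.pi*ν = 3*(Real.pi*ν) by ring,
    Real.cosh_three_mul, Real.cosh_two_mul, Real.sinh_sq]
  ring

lemma aux_c2 (ν : ℝ) : c₂ ν = (4 * Real.cosh (Real.pi*ν) * (Real.cosh (Real.pi*ν) - 1))^2 *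
    (3 + 4 * Real.cosh (Real.pi*ν) - 4 * Real.cosh (Real.pi*ν)^2) := by
  unfold c₂
  rw [show 2*Real.pi*ν = 2*(Real.pi*ν) by ring, show 3*Real.pi*ν = 3*(Real.pi*ν) by ring,
    show 4*Real.pi*ν = 2*(2*(Real.pi*ν)) by ring, show 6*Real.pi*ν = 2*(3*(Real.pi*ν)) by ring,
    show 5*Real.pi*ν = 3*(Real.pi*ν) + 2*(Real.pi*ν) by ring, Real.cosh_add]
  generalize Real.pi*ν = x
  simp only [Real.cosh_three_mul, Real.cosh_two_mul, Real.sinh_sq, Real.sinh_three_mul,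
    Real.sinh_two_mul]
  have h : Real.sinh x ^ 2 = Real.cosh x ^ 2 - 1 := Real.sinh_sq x
  have h4 : Real.sinh x ^ 4 = (Real.cosh x ^ 2 - 1)^2 := by rw [← h]; ring
  have h6 : Real.sinh x ^ 6 = (Real.cosh x ^ 2 - 1)^3 := by rw [← h]; ring
  ring_nf
  simp only [h, h4, h6]
  ring

lemma aux_arg (a b : ℝ) (ha : 0 < a) :
    Complex.arg ((a : ℂ) - (Complex.I/2) * (b : ℂ)) = Real.arctan (-(b/2)/a) := by
  set z : ℂ := (a : ℂ) - (Complex.I/2) * (b : ℂ) with hz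
  have hre : z.re = a := by simp [hz]
  have him : z.im = -(b/2) := by simp [hz]; ring
  have h := Complex.abs_arg_lt_pi_div_two_iff.2 (Or.inl (hre ▸ ha : 0 < z.re))
  rw [abs_lt] at h
  rw [← hre, ← him, ← Complex.tan_arg, Real.arctan_tan (by linarith) h.2]

lemma aux_cosh : Filter.Tendsto (fun ν : ℝ => (Real.cosh (Real.pi*ν) - 1)/ν^2)
    (nhdsWithin 0 (Set.Ioi 0)) (nhds (Real.pi^2/2)) := by
  have hd : HasDerivAt (fun ν : ℝ => Real.sinh (Real.pi/2*ν)) (Real.pi/2) 0 := by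
    have := (((hasDerivAt_id (0:ℝ)).const_mul (Real.pi/2))).sinh
    simpa using this
  have h1 := hd.tendsto_slope_zero_right
  have h2 := (h1.pow 2).const_mul 2
  refine (h2.congr' ?_).trans (by apply le_of_eq; congr 1; ring)
  filter_upwards [self_mem_nhdsWithin] with ν hν
  have : ν ≠ 0 := ne_of_gt hν
  rw [show Real.pi*ν = 2*(Real.pi/2*ν) by ring, Real.cosh_two_mul, Real.cosh_sq]
  simp
  field_simp
  ring

/-- as `ν → 0⁺`, `arg(c₁(ν) − (i/2)√(c₂(ν)))/ν² → −√3·π²`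
(`arg` the principal argument). -/
theorem stmt_10 :
    Filter.Tendsto
      (fun ν : ℝ =>
        Complex.arg ((c₁ ν : ℂ) - (Complex.I/2) * (Real.sqrt (c₂ ν) : ℂ)) / ν^2)
      (nhdsWithin 0 (Set.Ioi 0))
      (nhds (-(Real.sqrt 3 * Real.pi^2))) := by
  have hc : Filter.Tendsto (fun ν : ℝ => Real.cosh (Real.pi*ν)) (nhdsWithin 0 (Set.Ioi 0))
      (nhds 1) := by
    have : Continuous (fun ν : ℝ => Real.cosh (Real.pi*ν)) := by fun_prop
    simpa using (this.tendsto 0).mono_left nhdsWithin_le_nhds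
  -- the limit factor
  let f : ℝ → ℝ := fun C => -(2*C*Real.sqrt (3+4*C-4*C^2))/(-1+6*C^2-4*C^3)
  have hf : ContinuousAt f 1 := by
    apply ContinuousAt.div
    · fun_prop
    · fun_prop
    · norm_num
  have hf1 : f 1 = -(2*Real.sqrt 3) := by norm_num [f]
  have hF := hf.tendsto.comp hc
  have hg : Filter.Tendsto (fun ν : ℝ => f (Real.cosh (Real.pi*ν)) * (Real.cosh (Real.pi*ν) - 1))
      (nhdsWithin 0 (Set.Ioi 0)) (nhds 0) := by
    simpa using hF.mul (hc.sub_const 1)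
  have hda : HasDerivAt Real.arctan 1 0 := by simpa using Real.hasDerivAt_arctan 0
  have hds := (continuousAt_dslope_same.2 hda.differentiableAt).tendsto.comp hg
  rw [dslope_same, hda.deriv] at hds
  have hlim := (hds.mul hF).mul aux_cosh
  have he : 1 * f 1 * (Real.pi^2/2) = -(Real.sqrt 3 * Real.pi^2) := by rw [hf1]; ring
  rw [he] at hlim
  refine hlim.congr' ?_
  have hpos : ∀ᶠ ν in nhdsWithin (0:ℝ) (Set.Ioi 0), 0 < c₁ ν := by
    have h : Filter.Tendsto c₁ (nhdsWithin 0 (Set.Ioi 0)) (nhds 1) := by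
      have h2 := ((hc.pow 2).const_mul 6).const_add (-1) |>.sub ((hc.pow 3).const_mul 4)
      norm_num at h2
      exact h2.congr (fun ν => (aux_c1 ν).symm)
    exact h.eventually (lt_mem_nhds one_pos)
  filter_upwards [hpos] with ν h1
  have hC := Real.one_le_cosh (Real.pi*ν)
  rw [aux_arg _ _ h1]
  have hs : Real.sqrt (c₂ ν) = 4 * Real.cosh (Real.pi*ν) * (Real.cosh (Real.pi*ν) - 1) *
      Real.sqrt (3 + 4 * Real.cosh (Real.pi*ν) - 4 * Real.cosh (Real.pi*ν)^2) := by
    rw [aux_c2, Real.sqrt_mul (sq_nonneg _), Real.sqrt_sq]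
    exact mul_nonneg (by linarith) (by linarith)
  have hx : -(Real.sqrt (c₂ ν)/2)/c₁ ν
      = f (Real.cosh (Real.pi*ν)) * (Real.cosh (Real.pi*ν) - 1) := by
    rw [hs, aux_c1]
    simp only [f]
    ring
  rw [hx]
  have hk := sub_smul_dslope Real.arctan 0
    (f (Real.cosh (Real.pi*ν)) * (Real.cosh (Real.pi*ν) - 1))
  simp only [sub_zero, Real.arctan_zero, smul_eq_mul] at hk
  rw [← hk]
  simp only [Function.comp]
  ring
end

section
/- Let μ ∈ ℂ, let ν be a nonzero real number, and let d ∈ ℂ, and assume 2μ−1+2iν ≠ 0 and 2μ−1−2iν ≠ 0. Then for every integer k, the complex derivative of g at t_k(1) := −(d + kπ)/ν equals 2μ−1, and the complex derivative of g at t_k(2) := t_k(1) − (i/ν)·Log((2μ−1+2iν)/(2μ−1−2iν)) equals −(2μ−1), where Log is the principal branch of the complex logarithm. (In the notation of the pole-location algorithm, Y₁₁^{(1)} = −Y₁₁^{(2)} = 2μ−1.) -/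
open Complex

/-- Derivative of `g` at a point where `exp (2i(d + νt)) = E`. -/
lemma deriv_g_of_exp (μ : ℂ) (ν : ℝ) (hν : ν ≠ 0) (d t E : ℂ)
    (hE : Complex.exp (2*I*d + 2*I*(ν:ℂ)*t) = E) :
    deriv (g μ ν d) t = I / (8*(ν:ℂ)) *
      ((2*μ - 1 - 2*I*(ν:ℂ))^2 * E - (2*μ - 1 + 2*I*(ν:ℂ))^2 * E⁻¹) := by
  have hν' : (ν:ℂ) ≠ 0 := by exact_mod_cast hν
  have hl : HasDerivAt (fun t : ℂ => 2*I*(ν:ℂ)*t) (2*I*(ν:ℂ)) t := by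
    simpa using (hasDerivAt_id t).const_mul (2*I*(ν:ℂ))
  have hg : HasDerivAt (g μ ν d) _ t :=
    (((hl.neg.cexp).const_mul
      ((2*μ - 1 + 2*I*(ν:ℂ))^2 / (16*(ν:ℂ)^2) * Complex.exp (-(2*I*d)))).sub_const
      (((2*μ - 1)^2 - 4*(ν:ℂ)^2) / (8*(ν:ℂ)^2))).add
    ((hl.cexp).const_mul
      ((2*μ - 1 - 2*I*(ν:ℂ))^2 / (16*(ν:ℂ)^2) * Complex.exp (2*I*d)))
  rw [hg.deriv, ← hE, ← Complex.exp_neg, neg_add, Complex.exp_add, Complex.exp_add]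
  simp only [Pi.neg_apply]
  field_simp
  ring

/-- the complex derivative of `g` at `t_k(1) = −(d+kπ)/ν` equals `2μ−1`,
and at `t_k(2) = t_k(1) − (i/ν)·Log((2μ−1+2iν)/(2μ−1−2iν))` it equals `−(2μ−1)`. -/
theorem stmt_11 (μ : ℂ) (ν : ℝ) (hν : ν ≠ 0) (d : ℂ)
    (h1 : 2*μ - 1 + 2*I*(ν:ℂ) ≠ 0) (h2 : 2*μ - 1 - 2*I*(ν:ℂ) ≠ 0) :
    ∀ k : ℤ,
      deriv (g μ ν d) (-((d + (k:ℂ)*(Real.pi:ℂ)) / (ν:ℂ))) = 2*μ - 1 ∧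
      deriv (g μ ν d) (-((d + (k:ℂ)*(Real.pi:ℂ)) / (ν:ℂ))
          - (I/(ν:ℂ)) * Complex.log ((2*μ - 1 + 2*I*(ν:ℂ)) / (2*μ - 1 - 2*I*(ν:ℂ))))
        = -(2*μ - 1) := by
  intro k
  have hν' : (ν:ℂ) ≠ 0 := by exact_mod_cast hν
  have hI : I * I = -1 := Complex.I_mul_I
  constructor
  · rw [deriv_g_of_exp μ ν hν d _ 1]
    · field_simp
      linear_combination (-8 * (ν:ℂ) * (2*μ - 1)) * hI
    · rw [Complex.exp_eq_one_iff]
      refine ⟨-k, ?_⟩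
      push_cast
      field_simp
      ring
  · rw [deriv_g_of_exp μ ν hν d _
      (((2*μ - 1 + 2*I*(ν:ℂ)) / (2*μ - 1 - 2*I*(ν:ℂ)))^2)]
    · rw [div_pow, inv_div, mul_div_cancel₀ _ (pow_ne_zero 2 h2),
        mul_div_cancel₀ _ (pow_ne_zero 2 h1)]
      field_simp
      linear_combination (8 * (ν:ℂ) * (2*μ - 1)) * hI
    · have hq := Complex.exp_log (div_ne_zero h1 h2)
      set L := Complex.log ((2*μ - 1 + 2*I*(ν:ℂ)) / (2*μ - 1 - 2*I*(ν:ℂ))) with hL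
      rw [← hq, ← Complex.exp_nat_mul, Complex.exp_eq_exp_iff_exists_int]
      refine ⟨-k, ?_⟩
      push_cast
      field_simp
      linear_combination (-L) * hI
end

section
/- Let μ ∈ ℂ, let ν be a nonzero real number, and let d ∈ ℂ, and assume 2μ−1+2iν ≠ 0 and 2μ−1−2iν ≠ 0. Define the entire function Y₂ : ℂ → ℂ by Y₂(t) = A(ν)·e^{4id}e^{4iνt} + B(ν)·e^{2id}e^{2iνt} + C + B(−ν)·e^{−2id}e^{−2iνt} + A(−ν)·e^{−4id}e^{−4iνt}, where A(ν) := −(2μ−1−2iν)⁴/(512ν⁴), B(ν) := ((2μ−1)² + 8iν³)·(2μ−1−2iν)²/(128ν⁴), and C := −((2μ−1)² + 4ν²)·(3(2μ−1)² − 4ν²)/(256ν⁴). Then for every integer k, Y₂(t_k(1)) = μ − 1/2 and Y₂(t_k(2)) = 1/2 − μ, where t_k(1) := −(d + kπ)/ν and t_k(2) := t_k(1) − (i/ν)·Log((2μ−1+2iν)/(2μ−1−2iν)) (Log the principal branch). (In the notation of the pole-location algorithm, Y₂₀^{(1)} = −Y₂₀^{(2)} = μ − 1/2; combined with Y₁₁^{(1)}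 = −Y₁₁^{(2)} = 2μ−1 this yields the leading pole correction Δ₂ = −Y₂₀/Y₁₁ = −1/2.) -/
open Complex

/-- `A(ν) = −(2μ−1−2iν)⁴/(512ν⁴)`. -/
noncomputable def Acoef (μ : ℂ) (ν : ℝ) : ℂ := -(2*μ - 1 - 2*I*(ν:ℂ))^4 / (512*(ν:ℂ)^4)

/-- `B(ν) = ((2μ−1)² + 8iν³)·(2μ−1−2iν)²/(128ν⁴)`. -/
noncomputable def Bcoef (μ : ℂ) (ν : ℝ) : ℂ :=
  ((2*μ - 1)^2 + 8*I*(ν:ℂ)^3) * (2*μ - 1 - 2*I*(ν:ℂ))^2 / (128*(ν:ℂ)^4)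

/-- `C = −((2μ−1)² + 4ν²)·(3(2μ−1)² − 4ν²)/(256ν⁴)`. -/
noncomputable def Ccoef (μ : ℂ) (ν : ℝ) : ℂ :=
  -((2*μ - 1)^2 + 4*(ν:ℂ)^2) * (3*(2*μ - 1)^2 - 4*(ν:ℂ)^2) / (256*(ν:ℂ)^4)

/-- The second-order term `y₂` of the expansion of `1/y`, in the variable `t = log x`:
`Y₂(t) = A(ν)e^{4id}e^{4iνt} + B(ν)e^{2id}e^{2iνt} + C + B(−ν)e^{−2id}e^{−2iνt} + A(−ν)e^{−4id}e^{−4iνt}`. -/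
noncomputable def Y₂ (μ : ℂ) (ν : ℝ) (d : ℂ) (t : ℂ) : ℂ :=
  Acoef μ ν * Complex.exp (4*I*d) * Complex.exp (4*I*(ν:ℂ)*t)
    + Bcoef μ ν * Complex.exp (2*I*d) * Complex.exp (2*I*(ν:ℂ)*t)
    + Ccoef μ ν
    + Bcoef μ (-ν) * Complex.exp (-(2*I*d)) * Complex.exp (-(2*I*(ν:ℂ)*t))
    + Acoef μ (-ν) * Complex.exp (-(4*I*d)) * Complex.exp (-(4*I*(ν:ℂ)*t))

/-- `Y₂` expressed through `z = e^{2i(d+νt)}`. -/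
lemma Y₂_eq (μ : ℂ) (ν : ℝ) (d t z : ℂ) (hz : Complex.exp (2*I*(d + ν*t)) = z) :
    Y₂ μ ν d t = Acoef μ ν * z^2 + Bcoef μ ν * z + Ccoef μ ν
      + Bcoef μ (-ν) * z⁻¹ + Acoef μ (-ν) * (z⁻¹)^2 := by
  have e1 : Complex.exp (2*I*d) * Complex.exp (2*I*(ν:ℂ)*t) = z := by
    rw [← Complex.exp_add, ← hz]; congr 1; ring
  have e2 : Complex.exp (4*I*d) * Complex.exp (4*I*(ν:ℂ)*t) = z^2 := by
    rw [← Complex.exp_add, ← hz, ← Complex.exp_nat_mul]; congr 1; push_cast; ring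
  have e3 : Complex.exp (-(2*I*d)) * Complex.exp (-(2*I*(ν:ℂ)*t)) = z⁻¹ := by
    rw [← Complex.exp_add, ← hz, ← Complex.exp_neg]; congr 1; ring
  have e4 : Complex.exp (-(4*I*d)) * Complex.exp (-(4*I*(ν:ℂ)*t)) = (z⁻¹)^2 := by
    rw [← Complex.exp_add, ← hz, ← Complex.exp_neg, ← Complex.exp_nat_mul]
    congr 1; push_cast; ring
  unfold Y₂
  rw [mul_assoc, e2, mul_assoc, e1, mul_assoc, e3, mul_assoc, e4]

/-- for every integer `k`, `Y₂(t_k(1)) = μ − 1/2` and `Y₂(t_k(2)) = 1/2 − μ`,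
where `t_k(1) = −(d+kπ)/ν` and `t_k(2) = t_k(1) − (i/ν)·Log((2μ−1+2iν)/(2μ−1−2iν))`. -/
theorem stmt_12 (μ : ℂ) (ν : ℝ) (hν : ν ≠ 0) (d : ℂ)
    (h1 : 2*μ - 1 + 2*I*(ν:ℂ) ≠ 0) (h2 : 2*μ - 1 - 2*I*(ν:ℂ) ≠ 0) :
    ∀ k : ℤ,
      Y₂ μ ν d (-((d + (k:ℂ)*(Real.pi:ℂ)) / (ν:ℂ))) = μ - 1/2 ∧
      Y₂ μ ν d (-((d + (k:ℂ)*(Real.pi:ℂ)) / (ν:ℂ))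
          - (I/(ν:ℂ)) * Complex.log ((2*μ - 1 + 2*I*(ν:ℂ)) / (2*μ - 1 - 2*I*(ν:ℂ))))
        = 1/2 - μ := by
  intro k
  have hv : (ν:ℂ) ≠ 0 := by exact_mod_cast hν
  have hI : I^2 = -1 := Complex.I_sq
  have hI4 : I^4 = 1 := Complex.I_pow_four
  have hk : Complex.exp (-(k * (2 * Real.pi * I))) = 1 := by
    rw [Complex.exp_neg, Complex.exp_int_mul_two_pi_mul_I, inv_one]
  constructor
  · rw [Y₂_eq μ ν d _ 1]
    · unfold Acoef Bcoef Ccoef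
      push_cast
      field_simp
      ring_nf
      simp only [hI, hI4]
      ring
    · rw [← hk]; congr 1; field_simp; ring
  · have h3 := div_ne_zero h1 h2
    rw [Y₂_eq μ ν d _ (((2*μ - 1 + 2*I*(ν:ℂ)) / (2*μ - 1 - 2*I*(ν:ℂ)))^2)]
    · have a1 : Acoef μ ν * ((((2*μ - 1 + 2*I*(ν:ℂ)) / (2*μ - 1 - 2*I*(ν:ℂ)))^2)^2)
          = Acoef μ (-ν) := by
        unfold Acoef; push_cast; field_simp; ring
      have a2 : Acoef μ (-ν) * (((((2*μ - 1 + 2*I*(ν:ℂ)) / (2*μ - 1 - 2*I*(ν:ℂ)))^2)⁻¹)^2)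
          = Acoef μ ν := by
        rw [← a1]; field_simp
      have b1 : Bcoef μ ν * (((2*μ - 1 + 2*I*(ν:ℂ)) / (2*μ - 1 - 2*I*(ν:ℂ)))^2)
          = ((2*μ - 1)^2 + 8*I*(ν:ℂ)^3) * (2*μ - 1 + 2*I*(ν:ℂ))^2 / (128*(ν:ℂ)^4) := by
        unfold Bcoef; field_simp
      have b2 : Bcoef μ (-ν) * (((2*μ - 1 + 2*I*(ν:ℂ)) / (2*μ - 1 - 2*I*(ν:ℂ)))^2)⁻¹
          = ((2*μ - 1)^2 - 8*I*(ν:ℂ)^3) * (2*μ - 1 - 2*I*(ν:ℂ))^2 / (128*(ν:ℂ)^4) := by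
        have : Bcoef μ (-ν) =
          ((2*μ - 1)^2 - 8*I*(ν:ℂ)^3) * (2*μ - 1 + 2*I*(ν:ℂ))^2 / (128*(ν:ℂ)^4) := by
          unfold Bcoef; push_cast; ring
        rw [this]; field_simp
      rw [a1, a2, b1, b2]
      unfold Acoef Ccoef
      push_cast
      field_simp
      ring_nf
      simp only [hI, hI4]
      ring
    · conv_rhs => rw [← Complex.exp_log h3]
      rw [← Complex.exp_nat_mul, ← mul_one (Complex.exp (((2 : ℕ) : ℂ) * _)), ← hk, ← Complex.exp_add]
      congr 1
      generalize Complex.log _ = L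
      field_simp
      ring_nf
      simp only [hI]
      ring
end

section
/- Let μ ∈ ℂ, let ν be a nonzero real number, and let d ∈ ℂ, and define w : ℂ → ℂ by w(t) := 1/g(t). Then at every t ∈ ℂ with g(t) ≠ 0, the function w is twice complex-differentiable in a neighbourhood of t and satisfies 2·w(t)·(w(t) − 1)·w''(t) − (3·w(t) − 2)·(w'(t))² − (2μ−1)²·w(t)³·(w(t) − 1)² = 0. (This is the leading-order equation P₀ = 0 extracted from PVI_μ for x → 0; in the x-variable, with x·d/dx = d/dt, it reads 2y(y−1)(x²y'' + xy') − (3y−2)(xy')² − (2μ−1)²y³(y−1)² = 0, and w = 1/y₁ is a solution.) -/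
open Complex

/-- `w = 1/g`. -/
noncomputable def w (μ : ℂ) (ν : ℝ) (d : ℂ) : ℂ → ℂ := fun t => 1 / g μ ν d t

/-- The derivative of `g`. -/
noncomputable def gOne (μ : ℂ) (ν : ℝ) (d : ℂ) (t : ℂ) : ℂ :=
  (2*μ - 1 + 2*I*(ν:ℂ))^2 / (16*(ν:ℂ)^2) * Complex.exp (-(2*I*d)) *
      (Complex.exp (-(2*I*(ν:ℂ)*t)) * (-(2*I*(ν:ℂ))))
    + (2*μ - 1 - 2*I*(ν:ℂ))^2 / (16*(ν:ℂ)^2) * Complex.exp (2*I*d) *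
        (Complex.exp (2*I*(ν:ℂ)*t) * (2*I*(ν:ℂ)))

lemma hasDerivAt_expLin (a t : ℂ) :
    HasDerivAt (fun s => Complex.exp (a*s)) (Complex.exp (a*t) * a) t := by
  simpa using ((hasDerivAt_id t).const_mul a).cexp

lemma hasDerivAt_expLinNeg (a t : ℂ) :
    HasDerivAt (fun s => Complex.exp (-(a*s))) (Complex.exp (-(a*t)) * (-a)) t := by
  simpa using ((hasDerivAt_id t).const_mul a).neg.cexp

lemma hasDerivAt_g (μ : ℂ) (ν : ℝ) (d t : ℂ) : HasDerivAt (g μ ν d) (gOne μ ν d t) t := by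
  have h1 := (hasDerivAt_expLinNeg (2*I*(ν:ℂ)) t).const_mul
    ((2*μ - 1 + 2*I*(ν:ℂ))^2 / (16*(ν:ℂ)^2) * Complex.exp (-(2*I*d)))
  have h2 := (hasDerivAt_expLin (2*I*(ν:ℂ)) t).const_mul
    ((2*μ - 1 - 2*I*(ν:ℂ))^2 / (16*(ν:ℂ)^2) * Complex.exp (2*I*d))
  exact (h1.sub_const (((2*μ - 1)^2 - 4*(ν:ℂ)^2) / (8*(ν:ℂ)^2))).add h2

lemma hasDerivAt_gOne (μ : ℂ) (ν : ℝ) (d t : ℂ) : HasDerivAt (gOne μ ν d)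
    (-4*(ν:ℂ)^2*(g μ ν d t + ((2*μ - 1)^2 - 4*(ν:ℂ)^2) / (8*(ν:ℂ)^2))) t := by
  have h1 := ((hasDerivAt_expLinNeg (2*I*(ν:ℂ)) t).mul_const (-(2*I*(ν:ℂ)))).const_mul
    ((2*μ - 1 + 2*I*(ν:ℂ))^2 / (16*(ν:ℂ)^2) * Complex.exp (-(2*I*d)))
  have h2 := ((hasDerivAt_expLin (2*I*(ν:ℂ)) t).mul_const (2*I*(ν:ℂ))).const_mul
    ((2*μ - 1 - 2*I*(ν:ℂ))^2 / (16*(ν:ℂ)^2) * Complex.exp (2*I*d))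
  refine (h1.add h2).congr_deriv ?_
  unfold g
  generalize (2*μ - 1 + 2*I*(ν:ℂ))^2 / (16*(ν:ℂ)^2) = A
  generalize (2*μ - 1 - 2*I*(ν:ℂ))^2 / (16*(ν:ℂ)^2) = C
  generalize ((2*μ - 1)^2 - 4*(ν:ℂ)^2) / (8*(ν:ℂ)^2) = B
  ring_nf
  simp only [I_sq]
  ring

lemma gOne_sq (μ : ℂ) (ν : ℝ) (hν : ν ≠ 0) (d t : ℂ) :
    gOne μ ν d t ^ 2 =
      -(g μ ν d t - 1) * (4*(ν:ℂ)^2 * g μ ν d t + (2*μ-1)^2) := by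
  have hn : (ν:ℂ) ≠ 0 := by exact_mod_cast hν
  unfold g gOne
  have hd : Complex.exp (-(2*I*d)) * Complex.exp (2*I*d) = 1 := by
    rw [← Complex.exp_add]; simp
  have he : Complex.exp (-(2*I*(ν:ℂ)*t)) * Complex.exp (2*I*(ν:ℂ)*t) = 1 := by
    rw [← Complex.exp_add]; simp
  have hAC : ((2*μ - 1 + 2*I*(ν:ℂ))^2 / (16*(ν:ℂ)^2)) *
      ((2*μ - 1 - 2*I*(ν:ℂ))^2 / (16*(ν:ℂ)^2)) =
      ((2*μ-1)^2/(4*(ν:ℂ)^2) + 1)^2 / 16 := by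
    have : (2*μ - 1 + 2*I*(ν:ℂ)) * (2*μ - 1 - 2*I*(ν:ℂ)) = (2*μ-1)^2 + 4*(ν:ℂ)^2 := by
      linear_combination (-4*(ν:ℂ)^2) * I_sq
    rw [div_mul_div_comm, ← mul_pow, this]
    field_simp
    ring
  have hB : ((2*μ - 1)^2 - 4*(ν:ℂ)^2) / (8*(ν:ℂ)^2) = ((2*μ-1)^2/(4*(ν:ℂ)^2))/2 - 1/2 := by
    field_simp
    ring
  have hM : (2*μ-1)^2 = 4*(ν:ℂ)^2 * ((2*μ-1)^2/(4*(ν:ℂ)^2)) := by field_simp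
  rw [hB]
  generalize (2*μ - 1 + 2*I*(ν:ℂ))^2 / (16*(ν:ℂ)^2) = A at *
  generalize (2*μ - 1 - 2*I*(ν:ℂ))^2 / (16*(ν:ℂ)^2) = C at *
  generalize (2*μ-1)^2/(4*(ν:ℂ)^2) = m at *
  rw [hM]
  generalize Complex.exp (-(2*I*d)) = D at *
  generalize Complex.exp (2*I*d) = D' at *
  generalize Complex.exp (-(2*I*(ν:ℂ)*t)) = E at *
  generalize Complex.exp (2*I*(ν:ℂ)*t) = E' at *
  have hP : (A*D*E)*(C*D'*E') = (m+1)^2/16 := by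
    linear_combination hAC + A*C*D*D'*he + A*C*hd
  linear_combination (4*(ν:ℂ)^2*(A*D*E - C*D'*E')^2) * I_sq + 16*(ν:ℂ)^2 * hP

lemma hasDerivAt_w (μ : ℂ) (ν : ℝ) (d t : ℂ) (ht : g μ ν d t ≠ 0) :
    HasDerivAt (w μ ν d) (-gOne μ ν d t / g μ ν d t ^ 2) t := by
  have := (hasDerivAt_g μ ν d t).inv ht
  refine this.congr_of_eventuallyEq (Filter.Eventually.of_forall fun s => ?_)
  simp [w]

/-- at every `t` with `g(t) ≠ 0`, the function `w = 1/g` is twice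
complex-differentiable in a neighbourhood of `t` and satisfies
`2w(w−1)w'' − (3w−2)(w')² − (2μ−1)²w³(w−1)² = 0`. -/
theorem stmt_13 (μ : ℂ) (ν : ℝ) (hν : ν ≠ 0) (d : ℂ) (t : ℂ) (ht : g μ ν d t ≠ 0) :
    (∀ᶠ s in nhds t, DifferentiableAt ℂ (w μ ν d) s) ∧
    (∀ᶠ s in nhds t, DifferentiableAt ℂ (deriv (w μ ν d)) s) ∧
    2 * w μ ν d t * (w μ ν d t - 1) * deriv (deriv (w μ ν d)) t
      - (3 * w μ ν d t - 2) * (deriv (w μ ν d) t)^2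
      - (2*μ - 1)^2 * (w μ ν d t)^3 * (w μ ν d t - 1)^2 = 0 := by
  have hev : ∀ᶠ s in nhds t, g μ ν d s ≠ 0 :=
    (hasDerivAt_g μ ν d t).continuousAt.eventually_ne ht
  have h2 : ∀ s, g μ ν d s ≠ 0 → HasDerivAt (deriv (w μ ν d))
      ((-(-4*(ν:ℂ)^2*(g μ ν d s + ((2*μ - 1)^2 - 4*(ν:ℂ)^2) / (8*(ν:ℂ)^2))) * g μ ν d s ^ 2
        - (-gOne μ ν d s) * (2 * g μ ν d s * gOne μ ν d s)) / (g μ ν d s ^ 2) ^ 2) s := by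
    intro s hs
    have hs' : ∀ᶠ r in nhds s, g μ ν d r ≠ 0 :=
      (hasDerivAt_g μ ν d s).continuousAt.eventually_ne hs
    have hq := (hasDerivAt_gOne μ ν d s).neg.div ((hasDerivAt_g μ ν d s).pow 2)
      (pow_ne_zero 2 hs)
    refine (hq.congr_of_eventuallyEq ?_).congr_deriv ?_
    · filter_upwards [hs'] with r hr
      rw [(hasDerivAt_w μ ν d r hr).deriv]
      simp
    · simp
  refine ⟨hev.mono fun s hs => (hasDerivAt_w μ ν d s hs).differentiableAt,
    hev.mono fun s hs => (h2 s hs).differentiableAt, ?_⟩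
  rw [(h2 t ht).deriv, (hasDerivAt_w μ ν d t ht).deriv]
  have hsq := gOne_sq μ ν hν d t
  have hn : (ν:ℂ) ≠ 0 := by exact_mod_cast hν
  have hB : -(-4*(ν:ℂ)^2*(g μ ν d t + ((2*μ - 1)^2 - 4*(ν:ℂ)^2) / (8*(ν:ℂ)^2))) =
      4*(ν:ℂ)^2*g μ ν d t + ((2*μ - 1)^2 - 4*(ν:ℂ)^2)/2 := by
    field_simp
    ring
  rw [hB]
  simp only [w]
  generalize g μ ν d t = G at *
  generalize gOne μ ν d t = H at *
  have key : 2 * (1 / G) * (1 / G - 1) *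
      (((4*(ν:ℂ)^2*G + ((2*μ - 1)^2 - 4*(ν:ℂ)^2)/2) * G ^ 2 - -H * (2 * G * H)) / (G ^ 2) ^ 2)
      - (3 * (1 / G) - 2) * (-H / G ^ 2) ^ 2 - (2*μ - 1)^2 * (1 / G) ^ 3 * (1 / G - 1) ^ 2
      = ((1-2*G)*H^2 + 2*G*(1-G)*(4*(ν:ℂ)^2*G + ((2*μ - 1)^2 - 4*(ν:ℂ)^2)/2)
        - (2*μ-1)^2*(1-G)^2) / G^5 := by
    field_simp
    ring
  have h0 : (1-2*G)*H^2 + 2*G*(1-G)*(4*(ν:ℂ)^2*G + ((2*μ - 1)^2 - 4*(ν:ℂ)^2)/2)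
        - (2*μ-1)^2*(1-G)^2 = 0 := by
    rw [hsq]; ring
  have hfin := key.trans (by rw [h0, zero_div])
  exact hfin
end

section
/- Let μ ∈ ℂ, d₁ ∈ ℂ, and t ∈ ℂ, and let d : ℝ → ℂ be any function such that d(ν)/ν → d₁ as ν → 0 through nonzero real values. For each nonzero real ν let g_ν denote the function g with parameters (μ, ν, d(ν)). Then, as ν → 0 through nonzero real values, g_ν(t) tends to P₁(t) := (1/2 − μ)·((μ − 1/2)·(t + d₁) − 2)·(t + d₁). (Writing t = log x, this says lim_{ν→0} y₁(x) = −((2μ−1)²/4)·(log x)² − ((2μ−1)((2μ−1)d₁ − 2)/2)·log x − ((2μ−1)((2μ−1)d₁ − 4)d₁)/4 for x ≠ 0, i.e. the oscillatory leading term degenerates to a polynomial in log x.) -/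
open Complex

/-- if `d(ν)/ν → d₁` as `ν → 0` through nonzero reals, then for each
`t ∈ ℂ` the function `g` with parameters `(μ, ν, d(ν))` tends, as `ν → 0` through
nonzero reals, to `P₁(t) = (1/2 − μ)·((μ − 1/2)(t + d₁) − 2)·(t + d₁)`. -/
theorem stmt_14 (μ d₁ t : ℂ) (d : ℝ → ℂ)
    (hd : Filter.Tendsto (fun ν : ℝ => d ν / (ν:ℂ)) (nhdsWithin 0 {(0:ℝ)}ᶜ) (nhds d₁)) :
    Filter.Tendsto (fun ν : ℝ => g μ ν (d ν) t) (nhdsWithin 0 {(0:ℝ)}ᶜ)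
      (nhds ((1/2 - μ) * ((μ - 1/2) * (t + d₁) - 2) * (t + d₁))) := by
  have hν : Filter.Tendsto (fun ν : ℝ => (ν:ℂ)) (nhdsWithin 0 {(0:ℝ)}ᶜ) (nhds 0) := by
    have h : Filter.Tendsto (fun ν : ℝ => (ν:ℂ)) (nhds 0) (nhds ((0:ℝ):ℂ)) :=
      Complex.continuous_ofReal.tendsto 0
    rw [Complex.ofReal_zero] at h
    exact h.mono_left nhdsWithin_le_nhds
  have hne : ∀ᶠ ν : ℝ in nhdsWithin 0 {(0:ℝ)}ᶜ, (ν:ℂ) ≠ 0 := by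
    filter_upwards [self_mem_nhdsWithin] with ν h
    exact Complex.ofReal_ne_zero.mpr h
  have hq : Filter.Tendsto (fun ν : ℝ => t + d ν / (ν:ℂ)) (nhdsWithin 0 {(0:ℝ)}ᶜ)
      (nhds (t + d₁)) := hd.const_add t
  have hp : Filter.Tendsto (fun ν : ℝ => (ν:ℂ) * (t + d ν / (ν:ℂ)))
      (nhdsWithin 0 {(0:ℝ)}ᶜ) (nhds 0) := by
    simpa using hν.mul hq
  have hsl : ContinuousAt (dslope Complex.sin 0) 0 :=
    continuousAt_dslope_same.mpr Complex.differentiable_sin.differentiableAt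
  have hsl' : Filter.Tendsto (dslope Complex.sin 0) (nhds 0) (nhds 1) := by
    have h := hsl.tendsto
    rw [dslope_same, (Complex.hasDerivAt_sin 0).deriv, Complex.cos_zero] at h
    exact h
  have hS := (hsl'.comp hp).mul hq
  have hc : Filter.Tendsto (fun ν : ℝ => Complex.cos ((ν:ℂ) * (t + d ν / (ν:ℂ))))
      (nhdsWithin 0 {(0:ℝ)}ᶜ) (nhds 1) := by
    have h := (Complex.continuous_cos.tendsto 0).comp hp
    rw [Complex.cos_zero] at h
    exact h
  have hs : Filter.Tendsto (fun ν : ℝ => Complex.sin ((ν:ℂ) * (t + d ν / (ν:ℂ))))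
      (nhdsWithin 0 {(0:ℝ)}ᶜ) (nhds 0) := by
    have h := (Complex.continuous_sin.tendsto 0).comp hp
    rw [Complex.sin_zero] at h
    exact h
  have key := (((hS.pow 2).const_mul (-(2*μ-1)^2/4)).add
    ((hS.mul hc).const_mul (2*μ-1))).add (hs.pow 2)
  have e : (1/2 - μ) * ((μ - 1/2) * (t + d₁) - 2) * (t + d₁) =
      -(2*μ-1)^2/4 * (1 * (t + d₁))^2 + (2*μ-1) * (1 * (t + d₁) * 1) + 0^2 := by ring
  rw [e]
  refine key.congr' ?_
  filter_upwards [hne] with ν h0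
  have hphi : (ν:ℂ) * (t + d ν / (ν:ℂ)) = d ν + ν * t := by field_simp; ring
  have hds : ∀ z : ℂ, z * dslope Complex.sin 0 z = Complex.sin z := by
    intro z
    have h := sub_smul_dslope Complex.sin 0 z
    simpa using h
  have hSv : dslope Complex.sin 0 ((ν:ℂ) * (t + d ν / (ν:ℂ))) * (t + d ν / (ν:ℂ))
      = Complex.sin (d ν + ν * t) / ν := by
    rw [eq_div_iff h0, ← hphi, ← hds ((ν:ℂ) * (t + d ν / (ν:ℂ)))]
    ring
  simp only [Function.comp_apply]
  rw [hSv, hphi]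
  unfold g
  have e1 : Complex.exp (-(2*I*d ν)) * Complex.exp (-(2*I*(ν:ℂ)*t)) =
      (Complex.cos (d ν + ν * t) - Complex.sin (d ν + ν * t) * I)^2 := by
    have h := Complex.exp_mul_I (-(d ν + ν * t))
    rw [Complex.cos_neg, Complex.sin_neg, neg_mul, neg_mul, ← sub_eq_add_neg] at h
    rw [← h, ← Complex.exp_add, ← Complex.exp_nat_mul]
    congr 1
    push_cast
    ring
  have e2 : Complex.exp (2*I*d ν) * Complex.exp (2*I*(ν:ℂ)*t) =
      (Complex.cos (d ν + ν * t) + Complex.sin (d ν + ν * t) * I)^2 := by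
    rw [← Complex.exp_mul_I, ← Complex.exp_add, ← Complex.exp_nat_mul]
    congr 1
    push_cast
    ring
  rw [mul_assoc, mul_assoc _ (Complex.exp (2*I*d ν)), e1, e2]
  have hsc := Complex.sin_sq_add_cos_sq (d ν + ν * t)
  generalize Complex.sin (d ν + ν * t) = S at *
  generalize Complex.cos (d ν + ν * t) = C at *
  have hI : I^2 = -1 := Complex.I_sq
  generalize I = J at *
  generalize (ν:ℂ) = n at *
  field_simp
  grind
end

section
/- Let ν > 0 be real and δ ∈ ℝ, and set d := δ + i·πν/2. Define y₁ : ℂ∖{0} → ℂ by y₁(x) = ((3−2iν)²/(16ν²))·e^{−2id}·x^{−2iν} − (9−4ν²)/(8ν²) + ((3+2iν)²/(16ν²))·e^{2id}·x^{2iν}, where x^{±2iν} := exp(±2iν·Log x) with Log the principal branch of the complex logarithm. Then for all r ∈ ℝ and y > 0, writing x = r − iy, one has ‖y₁(x)‖² = ((9+4ν²)/(8ν²))²·[ (cosh(a)·cos(b) − (9−4ν²)/(9+4ν²))² + sinh(a)²·sin(b)² ], where a := ν·(π − 2·arccos(r/√(r²+y²))), b := ν·ln(r²+y²) + 2·(ψ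 + δ), and ψ := arccos(3/√(9+4ν²)). -/
open Complex

/-- The `μ = −1` (quantum cohomology of `CP²`) leading term
`y₁(x) = ((3−2iν)²/(16ν²))e^{−2id}x^{−2iν} − (9−4ν²)/(8ν²) + ((3+2iν)²/(16ν²))e^{2id}x^{2iν}`,
with `x^{±2iν} = exp(±2iν·Log x)`, `Log` the principal branch. -/
noncomputable def y₁ (ν : ℝ) (d : ℂ) (x : ℂ) : ℂ :=
  (3 - 2*I*(ν:ℂ))^2 / (16*(ν:ℂ)^2) * Complex.exp (-(2*I*d)) *
      Complex.exp (-(2*I*(ν:ℂ)*Complex.log x))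
    - (9 - 4*(ν:ℂ)^2) / (8*(ν:ℂ)^2)
    + (3 + 2*I*(ν:ℂ))^2 / (16*(ν:ℂ)^2) * Complex.exp (2*I*d) *
        Complex.exp (2*I*(ν:ℂ)*Complex.log x)

/-- for `ν > 0`, `d = δ + iπν/2`, and `x = r − iy` with `y > 0`,
`‖y₁(x)‖² = ((9+4ν²)/(8ν²))²·[(cosh a·cos b − (9−4ν²)/(9+4ν²))² + sinh²a·sin²b]`
where `a = ν(π − 2arccos(r/√(r²+y²)))`, `b = ν·ln(r²+y²) + 2(ψ+δ)`,
`ψ = arccos(3/√(9+4ν²))`. -/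
theorem stmt_15 (ν : ℝ) (hν : 0 < ν) (δ r y : ℝ) (hy : 0 < y)
    (ψ a b : ℝ)
    (hψ : ψ = Real.arccos (3 / Real.sqrt (9 + 4*ν^2)))
    (ha : a = ν * (Real.pi - 2 * Real.arccos (r / Real.sqrt (r^2 + y^2))))
    (hb : b = ν * Real.log (r^2 + y^2) + 2*(ψ + δ)) :
    ‖y₁ ν ((δ:ℂ) + I * ((Real.pi:ℂ) * (ν:ℂ) / 2)) ((r:ℂ) - I*(y:ℂ))‖^2
      = ((9 + 4*ν^2)/(8*ν^2))^2 *
          ((Real.cosh a * Real.cos b - (9 - 4*ν^2)/(9 + 4*ν^2))^2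
            + (Real.sinh a)^2 * (Real.sin b)^2) := by
  have hνC : (ν:ℂ) ≠ 0 := by exact_mod_cast hν.ne'
  have hlog : Complex.log ((r:ℂ) - I*(y:ℂ)) = ((Real.log (r^2+y^2) / 2 : ℝ) : ℂ)
      - I * ((Real.arccos (r / Real.sqrt (r^2 + y^2)) : ℝ) : ℂ) := by
    have hre : ((r:ℂ) - I*(y:ℂ)).re = r := by simp
    have him : ((r:ℂ) - I*(y:ℂ)).im = -y := by simp
    have hn : ‖(r:ℂ) - I*(y:ℂ)‖ = Real.sqrt (r^2+y^2) := by
      rw [Complex.norm_def, Complex.normSq_apply, hre, him]; congr 1; ring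
    have harg : Complex.arg ((r:ℂ) - I*(y:ℂ)) = - Real.arccos (r / Real.sqrt (r^2 + y^2)) := by
      rw [Complex.arg_of_im_neg (by rw [him]; linarith), hre, hn]
    unfold Complex.log
    rw [hn, harg, Real.log_sqrt (by positivity)]
    push_cast; ring
  have hpol : (3:ℂ) + 2*I*(ν:ℂ) = (Real.sqrt (9+4*ν^2) : ℝ) * Complex.exp (I*(ψ:ℂ)) ∧
      (3:ℂ) - 2*I*(ν:ℂ) = (Real.sqrt (9+4*ν^2) : ℝ) * Complex.exp (-(I*(ψ:ℂ))) := by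
    have hs : 0 < Real.sqrt (9+4*ν^2) := Real.sqrt_pos.mpr (by positivity)
    have hsq : Real.sqrt (9+4*ν^2)^2 = 9+4*ν^2 := Real.sq_sqrt (by positivity)
    have hle : 3 / Real.sqrt (9+4*ν^2) ≤ 1 := by
      rw [div_le_one hs]; exact Real.le_sqrt_of_sq_le (by nlinarith)
    have hc : Real.sqrt (9+4*ν^2) * Real.cos ψ = 3 := by
      rw [hψ, Real.cos_arccos (by have : 0 ≤ 3 / Real.sqrt (9+4*ν^2) := by positivity
                                  linarith) hle]
      field_simp
    have hsn : Real.sqrt (9+4*ν^2) * Real.sin ψ = 2*ν := by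
      have h0 : 0 ≤ Real.sin ψ := by
        rw [hψ]; exact Real.sin_nonneg_of_nonneg_of_le_pi (Real.arccos_nonneg _) (Real.arccos_le_pi _)
      have h1 : (Real.sqrt (9+4*ν^2) * Real.sin ψ)^2 = (2*ν)^2 := by
        have h2 : (Real.sqrt (9+4*ν^2) * Real.sin ψ)^2 + (Real.sqrt (9+4*ν^2) * Real.cos ψ)^2
            = 9+4*ν^2 := by
          linear_combination hsq + (Real.sqrt (9+4*ν^2))^2 * Real.sin_sq_add_cos_sq ψ
        rw [hc] at h2
        linarith
      exact (sq_eq_sq₀ (by positivity) (by positivity)).mp h1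
    have hcC : ((Real.sqrt (9+4*ν^2) : ℝ) : ℂ) * Complex.cos (ψ:ℂ) = 3 := by exact_mod_cast hc
    have hsnC : ((Real.sqrt (9+4*ν^2) : ℝ) : ℂ) * Complex.sin (ψ:ℂ) = 2*ν := by exact_mod_cast hsn
    constructor
    · rw [mul_comm I, Complex.exp_mul_I]
      linear_combination -hcC - I * hsnC
    · rw [mul_comm I, ← neg_mul, Complex.exp_mul_I, Complex.cos_neg, Complex.sin_neg]
      linear_combination -hcC + I * hsnC
  have hsqC : ((Real.sqrt (9+4*ν^2) : ℝ) : ℂ)^2 = 9+4*(ν:ℂ)^2 := by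
    have : Real.sqrt (9+4*ν^2)^2 = 9+4*ν^2 := Real.sq_sqrt (by positivity)
    exact_mod_cast this
  have hne : (9:ℂ)+4*(ν:ℂ)^2 ≠ 0 := by
    have : (9:ℝ)+4*ν^2 ≠ 0 := by positivity
    exact_mod_cast this
  have key : y₁ ν ((δ:ℂ) + I * ((Real.pi:ℂ) * (ν:ℂ) / 2)) ((r:ℂ) - I*(y:ℂ))
      = (((9 + 4*ν^2)/(8*ν^2) : ℝ) : ℂ) *
        (((Real.cosh a * Real.cos b - (9 - 4*ν^2)/(9 + 4*ν^2) : ℝ) : ℂ)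
          + ((-(Real.sinh a * Real.sin b) : ℝ) : ℂ) * I) := by
    have hcosh : Complex.exp ((a:ℂ) - b * I) + Complex.exp (-((a:ℂ) - b * I))
        = 2 * (Complex.cosh a * Complex.cos b - Complex.sinh a * Complex.sin b * I) := by
      rw [← Complex.two_cosh, Complex.cosh_sub, Complex.cosh_mul_I, Complex.sinh_mul_I]
      ring
    have e1 : Complex.exp (-(I*(ψ:ℂ)))^2 * Complex.exp (-(2*I*((δ:ℂ) + I * ((Real.pi:ℂ) * (ν:ℂ) / 2)))) *
        Complex.exp (-(2*I*(ν:ℂ)*Complex.log ((r:ℂ) - I*(y:ℂ)))) = Complex.exp ((a:ℂ) - b * I) := by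
      rw [← Complex.exp_nat_mul, ← Complex.exp_add, ← Complex.exp_add, hlog, ha, hb]
      congr 1
      push_cast
      linear_combination (-(Real.pi:ℂ) * ν + 2 * ν * (Real.arccos (r / Real.sqrt (r^2 + y^2)) : ℝ)) * I_sq
    have e2 : Complex.exp (I*(ψ:ℂ))^2 * Complex.exp (2*I*((δ:ℂ) + I * ((Real.pi:ℂ) * (ν:ℂ) / 2))) *
        Complex.exp (2*I*(ν:ℂ)*Complex.log ((r:ℂ) - I*(y:ℂ))) = Complex.exp (-((a:ℂ) - b * I)) := by
      rw [← Complex.exp_nat_mul, ← Complex.exp_add, ← Complex.exp_add, hlog, ha, hb]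
      congr 1
      push_cast
      linear_combination ((Real.pi:ℂ) * ν - 2 * ν * (Real.arccos (r / Real.sqrt (r^2 + y^2)) : ℝ)) * I_sq
    unfold y₁
    rw [hpol.1, hpol.2, mul_pow, mul_pow, hsqC]
    trans (9+4*(ν:ℂ)^2)/(16*(ν:ℂ)^2) * (Complex.exp ((a:ℂ) - b * I) + Complex.exp (-((a:ℂ) - b * I)))
        - (9 - 4*(ν:ℂ)^2) / (8*(ν:ℂ)^2)
    · rw [← e1, ← e2]; ring
    · rw [hcosh]; push_cast; field_simp; ring
  rw [key, norm_mul, mul_pow, Complex.norm_real, Real.norm_eq_abs, sq_abs, Complex.sq_norm,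
    Complex.normSq_add_mul_I]
  ring
end

section
/- Let μ ∈ ℂ with μ − 1/2 ∉ ℤ, and let p₀₁, p_{x1} ∈ ℂ. For real ν > 0 define E(ν) := −(4·16^{2iν}·Γ(3/2 − μ − iν)²·Γ(μ + 1/2 − iν)²)/((2ν + i(1−2μ))²·ν²·sinh(2πν)²·Γ(−iν)⁴) · [ (1/2)·(e^{2πν}·p_{x1} − p₀₁)·sinh(2πν) + (cos(2πμ) + 1)·(e^{2πν} + 1) ], where Γ is the complex Gamma function and 16^{2iν} = exp(2iν·ln 16). Then E(ν) → 1 as ν → 0⁺, and ((i/2)·Log E(ν))/ν tends to d₁ := 2γ − 4·ln 2 + iπ/2 + 2·Γ'(μ + 1/2)/Γ(μ + 1/2) − π·tan(πμ) + iπ·(p_{x1} − p₀₁)/(8·cos²(πμ)) as ν → 0⁺, where Log is the principal branch of the complex logarithm, γ is the Euler–Mascheroni constant, and Γ'/Γ is the logarithmic derivative of the complex Gamma function. -/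
open Complex

/-- The quantity whose principal logarithm gives the integration constant `d(ν)` in the
generic case: `E(ν) = −(4·16^{2iν}·Γ(3/2−μ−iν)²·Γ(μ+1/2−iν)²)/((2ν+i(1−2μ))²ν²·sinh(2πν)²·Γ(−iν)⁴)
· [(1/2)(e^{2πν}p_{x1} − p₀₁)sinh(2πν) + (cos(2πμ)+1)(e^{2πν}+1)]`. -/
noncomputable def E (μ p01 px1 : ℂ) (ν : ℝ) : ℂ :=
  -(4 * Complex.exp (2*I*(ν:ℂ)*(Real.log 16 : ℂ)) *
      Complex.Gamma (3/2 - μ - I*(ν:ℂ))^2 * Complex.Gamma (μ + 1/2 - I*(ν:ℂ))^2) /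
    ((2*(ν:ℂ) + I*(1 - 2*μ))^2 * (ν:ℂ)^2 *
      Complex.sinh (2*(Real.pi:ℂ)*(ν:ℂ))^2 * Complex.Gamma (-(I*(ν:ℂ)))^4) *
  ((1/2) * (Complex.exp (2*(Real.pi:ℂ)*(ν:ℂ)) * px1 - p01) * Complex.sinh (2*(Real.pi:ℂ)*(ν:ℂ))
    + (Complex.cos (2*(Real.pi:ℂ)*μ) + 1) * (Complex.exp (2*(Real.pi:ℂ)*(ν:ℂ)) + 1))

/-- The bracket in `E`. -/
noncomputable def brk (μ p01 px1 z : ℂ) : ℂ :=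
  (1/2) * (Complex.exp (2*(Real.pi:ℂ)*z) * px1 - p01) * Complex.sinh (2*(Real.pi:ℂ)*z)
    + (Complex.cos (2*(Real.pi:ℂ)*μ) + 1) * (Complex.exp (2*(Real.pi:ℂ)*z) + 1)

/-- The quotient whose square appears in the regularised form of `E`. -/
noncomputable def quo (μ z : ℂ) : ℂ :=
  (Gamma (μ + 1/2 - I*z) * Gamma (1 + I*z)) /
    ((cos ((Real.pi:ℂ)*(μ + I*z)) * Gamma (μ + 1/2 + I*z)) *
      (cosh ((Real.pi:ℂ)*z) * Gamma (1 - I*z)))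

/-- Regularised form of `E`. -/
noncomputable def reg (μ p01 px1 z : ℂ) : ℂ :=
  quo μ z ^ 2 * Complex.exp (2*I*z*(Real.log 16 : ℂ)) * (brk μ p01 px1 z / 4)

lemma cos_ne (μ : ℂ) (hμ : ¬ ∃ m : ℤ, μ - 1/2 = (m:ℂ)) : cos ((Real.pi:ℂ)*μ) ≠ 0 := by
  rw [Complex.cos_ne_zero_iff]
  intro k h
  apply hμ
  refine ⟨k, ?_⟩
  have hpi : (Real.pi:ℂ) ≠ 0 := by exact_mod_cast Real.pi_ne_zero
  have : (Real.pi:ℂ) * μ = (Real.pi:ℂ) * ((2 * k + 1) / 2) := by rw [h]; ring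
  rw [mul_left_cancel₀ hpi this]; ring

lemma half_ne (μ : ℂ) (hμ : ¬ ∃ m : ℤ, μ - 1/2 = (m:ℂ)) (m : ℕ) : μ + 1/2 ≠ -(m:ℂ) := by
  intro h
  apply hμ
  refine ⟨-(m:ℤ) - 1, ?_⟩
  push_cast
  rw [← h]; ring

lemma E_eq_reg (μ p01 px1 : ℂ) (ν : ℝ) (hν : 0 < ν)
    (hc : cos ((Real.pi:ℂ)*(μ + I*ν)) ≠ 0) (hG : Gamma (μ + 1/2 + I*ν) ≠ 0)
    (hh : 1/2 - μ - I*ν ≠ 0) :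
    E μ p01 px1 ν = reg μ p01 px1 ν := by
  have hpi : (Real.pi:ℂ) ≠ 0 := by exact_mod_cast Real.pi_ne_zero
  have hν0 : (ν:ℂ) ≠ 0 := by exact_mod_cast hν.ne'
  have hI := I_ne_zero
  have hz : -(I*(ν:ℂ)) ≠ 0 := neg_ne_zero.mpr (mul_ne_zero hI hν0)
  have hsh : sinh ((Real.pi:ℂ)*ν) ≠ 0 := by
    have : Real.sinh (Real.pi * ν) ≠ 0 := by
      rw [Ne, Real.sinh_eq_zero]; positivity
    exact_mod_cast this
  have hch : cosh ((Real.pi:ℂ)*ν) ≠ 0 := by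
    have : Real.cosh (Real.pi * ν) ≠ 0 := (Real.cosh_pos _).ne'
    exact_mod_cast this
  have h1 : Gamma (1 - I*ν) = -(I*ν) * Gamma (-(I*ν)) := by
    rw [← Gamma_add_one _ hz]; congr 1; ring
  have hG1 : Gamma (1 - I*ν) ≠ 0 := Gamma_ne_zero_of_re_pos (by simp)
  have hG2 : Gamma (1 + I*ν) ≠ 0 := Gamma_ne_zero_of_re_pos (by simp)
  have hG3 : Gamma (-(I*ν)) ≠ 0 := fun h => hG1 (by rw [h1, h, mul_zero])
  -- reflection
  have h2 : Gamma (-(I*ν)) * Gamma (1 + I*ν) * sinh ((Real.pi:ℂ)*ν) * I = -(Real.pi:ℂ) := by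
    have h := Gamma_mul_Gamma_one_sub (-(I*(ν:ℂ)))
    have hs : sin ((Real.pi:ℂ) * -(I*(ν:ℂ))) = -(sinh ((Real.pi:ℂ)*ν) * I) := by
      rw [← sin_mul_I, ← sin_neg]; congr 1; ring
    rw [hs, show 1 - -(I*(ν:ℂ)) = 1 + I*ν by ring] at h
    rw [h]; field_simp
  have h3 : Gamma (3/2 - μ - I*ν) * (cos ((Real.pi:ℂ)*(μ + I*ν)) * Gamma (μ + 1/2 + I*ν))
      = (1/2 - μ - I*ν) * (Real.pi:ℂ) := by
    have h := Gamma_mul_Gamma_one_sub (1/2 - μ - I*(ν:ℂ))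
    have hs : sin ((Real.pi:ℂ) * (1/2 - μ - I*(ν:ℂ))) = cos ((Real.pi:ℂ)*(μ + I*ν)) := by
      rw [← sin_pi_div_two_sub]; congr 1; ring
    rw [hs, show 1 - (1/2 - μ - I*(ν:ℂ)) = μ + 1/2 + I*ν by ring, eq_div_iff hc] at h
    rw [show (3/2 - μ - I*(ν:ℂ)) = (1/2 - μ - I*ν) + 1 by ring, Gamma_add_one _ hh]
    linear_combination (1/2 - μ - I*(ν:ℂ)) * h
  have hs2 : sinh (2*(Real.pi:ℂ)*ν) = 2 * sinh ((Real.pi:ℂ)*ν) * cosh ((Real.pi:ℂ)*ν) := by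
    rw [← sinh_two_mul]; congr 1; ring
  have h4 : 2*(ν:ℂ) + I*(1 - 2*μ) = 2*I*(1/2 - μ - I*ν) := by
    linear_combination (2*(ν:ℂ)) * I_sq
  have h3' : Gamma (3/2 - μ - I*ν) = (1/2 - μ - I*ν) * (Real.pi:ℂ) /
      (cos ((Real.pi:ℂ)*(μ + I*ν)) * Gamma (μ + 1/2 + I*ν)) := by
    rw [eq_div_iff (mul_ne_zero hc hG), h3]
  have h2' : Gamma (1 + I*ν) = -(Real.pi:ℂ) / (Gamma (-(I*ν)) * sinh ((Real.pi:ℂ)*ν) * I) := by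
    rw [eq_div_iff (by simp [hG3, hsh]), ← h2]; ring
  have key : -(4 * Complex.exp (2*I*(ν:ℂ)*(Real.log 16 : ℂ)) *
      Complex.Gamma (3/2 - μ - I*(ν:ℂ))^2 * Complex.Gamma (μ + 1/2 - I*(ν:ℂ))^2) /
    ((2*(ν:ℂ) + I*(1 - 2*μ))^2 * (ν:ℂ)^2 *
      Complex.sinh (2*(Real.pi:ℂ)*(ν:ℂ))^2 * Complex.Gamma (-(I*(ν:ℂ)))^4) =
      quo μ ν ^ 2 * Complex.exp (2*I*ν*(Real.log 16 : ℂ)) / 4 := by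
    unfold quo
    rw [h4, hs2, h1, h3', h2']
    generalize Gamma (μ + 1/2 - I*ν) = A at *
    generalize Gamma (μ + 1/2 + I*ν) = A' at *
    generalize Gamma (-(I*ν)) = B at *
    generalize sinh ((Real.pi:ℂ)*ν) = s at *
    generalize cosh ((Real.pi:ℂ)*ν) = c at *
    generalize cos ((Real.pi:ℂ)*(μ+I*ν)) = d at *
    generalize (1/2 - μ - I*ν) = w at *
    generalize exp (2*I*ν*(Real.log 16 : ℂ)) = e at *
    have hI4 : I^4 = 1 := I_pow_four
    field_simp
    try simp only [I_sq, hI4]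
    try ring
  unfold E reg
  rw [key, brk]; ring

lemma ld_mul {f g : ℂ → ℂ} {a b x : ℂ} (hf : HasDerivAt f (f x * a) x)
    (hg : HasDerivAt g (g x * b) x) :
    HasDerivAt (fun z => f z * g z) (f x * g x * (a + b)) x := by
  refine (hf.mul hg).congr_deriv ?_; ring

lemma ld_div {f g : ℂ → ℂ} {a b x : ℂ} (hf : HasDerivAt f (f x * a) x)
    (hg : HasDerivAt g (g x * b) x) (h0 : g x ≠ 0) :
    HasDerivAt (fun z => f z / g z) (f x / g x * (a - b)) x := by
  refine (hf.div hg h0).congr_deriv ?_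
  field_simp

lemma ld_Gamma (c k : ℂ) (hc : ∀ m : ℕ, c ≠ -m) :
    HasDerivAt (fun z => Gamma (c + k * z))
      (Gamma (c + k * 0) * (k * (deriv Gamma c / Gamma c))) 0 := by
  have h0 := Gamma_ne_zero hc
  have h : HasDerivAt Gamma (deriv Gamma c) (c + k * 0) := by
    simpa using (differentiableAt_Gamma c hc).hasDerivAt
  have h2 : HasDerivAt (fun z : ℂ => c + k * z) k 0 := by
    simpa using ((hasDerivAt_id (0:ℂ)).const_mul k).const_add c
  refine (h.comp (0:ℂ) h2).congr_deriv ?_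
  simp only [mul_zero, add_zero]
  field_simp

lemma brk_zero (μ p01 px1 : ℂ) : brk μ p01 px1 0 = 4 * cos ((Real.pi:ℂ)*μ)^2 := by
  simp only [brk, mul_zero, sinh_zero, exp_zero]
  rw [show 2*(Real.pi:ℂ)*μ = 2 * ((Real.pi:ℂ)*μ) by ring, cos_two_mul]; ring

lemma brk_deriv (μ p01 px1 : ℂ) : HasDerivAt (brk μ p01 px1)
    ((Real.pi:ℂ) * (px1 - p01) + 4 * Real.pi * cos ((Real.pi:ℂ)*μ)^2) 0 := by
  have hl : HasDerivAt (fun z : ℂ => 2*(Real.pi:ℂ)*z) (2*(Real.pi:ℂ)) 0 := by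
    simpa using (hasDerivAt_id (0:ℂ)).const_mul (2*(Real.pi:ℂ))
  have he := hl.cexp
  have hs := hl.csinh
  have := ((((he.mul_const px1).sub_const p01).const_mul (1/2)).mul hs).add
    ((he.add_const 1).const_mul (cos (2*(Real.pi:ℂ)*μ) + 1))
  refine this.congr_deriv ?_
  simp only [mul_zero, sinh_zero, cosh_zero, exp_zero]
  rw [show 2*(Real.pi:ℂ)*μ = 2 * ((Real.pi:ℂ)*μ) by ring, cos_two_mul]; ring

lemma quo_zero (μ : ℂ) (hμ : ¬ ∃ m : ℤ, μ - 1/2 = (m:ℂ)) :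
    quo μ 0 = 1 / cos ((Real.pi:ℂ)*μ) := by
  have := Gamma_ne_zero (half_ne μ hμ)
  have := cos_ne μ hμ
  simp only [quo, mul_zero, add_zero, sub_zero, cosh_zero, Gamma_one]
  generalize Gamma (μ + 1/2) = G at *
  field_simp

lemma quo_deriv (μ : ℂ) (hμ : ¬ ∃ m : ℤ, μ - 1/2 = (m:ℂ)) :
    HasDerivAt (quo μ) (quo μ 0 * (-2 * I * (deriv Gamma (μ + 1/2) / Gamma (μ + 1/2))
      - 2 * I * Real.eulerMascheroniConstant + I * Real.pi * tan ((Real.pi:ℂ)*μ))) 0 := by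
  have hg := Gamma_ne_zero (half_ne μ hμ)
  have hc := cos_ne μ hμ
  have h1' : ∀ m : ℕ, (1:ℂ) ≠ -m := by
    intro m h
    have : (1:ℝ) = -m := by exact_mod_cast h
    have : (0:ℝ) ≤ m := Nat.cast_nonneg m
    linarith
  have e1 : deriv Gamma 1 / Gamma 1 = -(Real.eulerMascheroniConstant : ℂ) := by
    rw [hasDerivAt_Gamma_one.deriv, Gamma_one, div_one]
  have a1 := ld_Gamma (μ + 1/2) (-I) (half_ne μ hμ)
  have a2 := ld_Gamma (μ + 1/2) I (half_ne μ hμ)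
  have b1 := ld_Gamma 1 I h1'
  have b2 := ld_Gamma 1 (-I) h1'
  rw [e1] at b1 b2
  have hl : HasDerivAt (fun z : ℂ => (Real.pi:ℂ)*(μ + I*z)) (Real.pi * I) 0 := by
    simpa using (((hasDerivAt_id (0:ℂ)).const_mul I).const_add μ).const_mul (Real.pi:ℂ)
  have hl' : HasDerivAt (fun z : ℂ => (Real.pi:ℂ)*z) (Real.pi:ℂ) 0 := by
    simpa using (hasDerivAt_id (0:ℂ)).const_mul (Real.pi:ℂ)
  have c1 : HasDerivAt (fun z : ℂ => cos ((Real.pi:ℂ)*(μ + I*z)))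
      (cos ((Real.pi:ℂ)*(μ + I*0)) * (-(I * Real.pi * tan ((Real.pi:ℂ)*μ)))) 0 := by
    refine hl.ccos.congr_deriv ?_
    simp only [mul_zero, add_zero, tan_eq_sin_div_cos]
    field_simp
  have c2 : HasDerivAt (fun z : ℂ => cosh ((Real.pi:ℂ)*z)) (cosh ((Real.pi:ℂ)*0) * 0) 0 := by
    refine hl'.ccosh.congr_deriv ?_
    simp
  have H := ld_div (ld_mul a1 b1) (ld_mul (ld_mul c1 a2) (ld_mul c2 b2)) (by
    simp only [mul_zero, add_zero, cosh_zero, Gamma_one, mul_one]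
    exact mul_ne_zero hc hg)
  have hq : quo μ = fun z => (Gamma (μ + 1/2 + -I*z) * Gamma (1 + I*z)) /
    ((cos ((Real.pi:ℂ)*(μ + I*z)) * Gamma (μ + 1/2 + I*z)) *
      (cosh ((Real.pi:ℂ)*z) * Gamma (1 + -I*z))) := by
    funext z
    simp only [quo, sub_eq_add_neg, neg_mul]
  rw [hq]
  refine H.congr_deriv ?_
  ring

lemma reg_zero (μ : ℂ) (hμ : ¬ ∃ m : ℤ, μ - 1/2 = (m:ℂ)) (p01 px1 : ℂ) :
    reg μ p01 px1 0 = 1 := by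
  have := cos_ne μ hμ
  rw [reg, quo_zero μ hμ, brk_zero]
  simp only [mul_zero, zero_mul, exp_zero]
  field_simp

lemma reg_deriv (μ : ℂ) (hμ : ¬ ∃ m : ℤ, μ - 1/2 = (m:ℂ)) (p01 px1 : ℂ) :
    HasDerivAt (reg μ p01 px1) (2 * (-2 * I * (deriv Gamma (μ + 1/2) / Gamma (μ + 1/2))
      - 2 * I * Real.eulerMascheroniConstant + I * Real.pi * tan ((Real.pi:ℂ)*μ))
      + 2 * I * (Real.log 16 : ℂ)
      + (Real.pi + Real.pi * (px1 - p01) / (4 * cos ((Real.pi:ℂ)*μ)^2))) 0 := by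
  have hc := cos_ne μ hμ
  have hq := quo_deriv μ hμ
  have he : HasDerivAt (fun z : ℂ => exp (2*I*z*(Real.log 16 : ℂ)))
      (exp (2*I*0*(Real.log 16 : ℂ)) * (2 * I * (Real.log 16 : ℂ))) 0 := by
    have : HasDerivAt (fun z : ℂ => 2*I*z*(Real.log 16 : ℂ)) (2 * I * (Real.log 16 : ℂ)) 0 := by
      simpa using ((hasDerivAt_id (0:ℂ)).const_mul (2*I)).mul_const (Real.log 16 : ℂ)
    exact this.cexp
  have hb : HasDerivAt (fun z => brk μ p01 px1 z / 4) (brk μ p01 px1 0 / 4 *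
      (Real.pi + Real.pi * (px1 - p01) / (4 * cos ((Real.pi:ℂ)*μ)^2))) 0 := by
    refine ((brk_deriv μ p01 px1).div_const 4).congr_deriv ?_
    rw [brk_zero]; field_simp; ring
  have H := ld_mul (ld_mul (ld_mul hq hq) he) hb
  have h0 := reg_zero μ hμ p01 px1
  have hr : reg μ p01 px1 = fun z => quo μ z * quo μ z * exp (2*I*z*(Real.log 16 : ℂ)) *
      (brk μ p01 px1 z / 4) := by
    funext z; simp only [reg, sq]
  have h0' : quo μ 0 * quo μ 0 * exp (2*I*0*(Real.log 16 : ℂ)) * (brk μ p01 px1 0 / 4) = 1 := by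
    rw [← h0, hr]
  rw [hr]
  refine H.congr_deriv ?_
  rw [h0']; ring

/-- for `μ − 1/2 ∉ ℤ`, `E(ν) → 1` as `ν → 0⁺`, and
`((i/2)·Log E(ν))/ν → d₁ = 2γ − 4ln2 + iπ/2 + 2Γ'(μ+1/2)/Γ(μ+1/2) − π·tan(πμ)
+ iπ(p_{x1} − p₀₁)/(8cos²(πμ))`. -/
theorem stmt_16 (μ : ℂ) (hμ : ¬ ∃ m : ℤ, μ - 1/2 = (m:ℂ)) (p01 px1 : ℂ) :
    Filter.Tendsto (fun ν : ℝ => E μ p01 px1 ν) (nhdsWithin 0 (Set.Ioi 0)) (nhds 1) ∧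
    Filter.Tendsto (fun ν : ℝ => ((I/2) * Complex.log (E μ p01 px1 ν)) / (ν:ℂ))
      (nhdsWithin 0 (Set.Ioi 0))
      (nhds (2*(Real.eulerMascheroniConstant : ℂ) - 4*(Real.log 2 : ℂ) + I*(Real.pi:ℂ)/2
        + 2 * deriv Complex.Gamma (μ + 1/2) / Complex.Gamma (μ + 1/2)
        - (Real.pi:ℂ) * Complex.tan ((Real.pi:ℂ)*μ)
        + I*(Real.pi:ℂ)*(px1 - p01) / (8 * Complex.cos ((Real.pi:ℂ)*μ)^2))) := by
  have hc := cos_ne μ hμ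
  have hg := Gamma_ne_zero (half_ne μ hμ)
  have hd := reg_deriv μ hμ p01 px1
  have h0 := reg_zero μ hμ p01 px1
  have hcast : Filter.Tendsto (fun ν : ℝ => (ν:ℂ)) (nhdsWithin 0 (Set.Ioi 0))
      (nhdsWithin 0 {0}ᶜ) := by
    refine tendsto_nhdsWithin_iff.mpr ⟨?_, ?_⟩
    · have : Filter.Tendsto (fun ν : ℝ => (ν:ℂ)) (nhds 0) (nhds ((0:ℝ):ℂ)) :=
        continuous_ofReal.tendsto 0
      rw [ofReal_zero] at this
      exact this.mono_left nhdsWithin_le_nhds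
    · filter_upwards [self_mem_nhdsWithin] with ν hν
      have : (ν:ℂ) ≠ 0 := by exact_mod_cast (ne_of_gt hν)
      simpa using this
  have hcast' := tendsto_nhds_of_tendsto_nhdsWithin hcast
  have hev : ∀ᶠ ν : ℝ in nhdsWithin 0 (Set.Ioi 0), E μ p01 px1 ν = reg μ p01 px1 ν := by
    have c1 : ContinuousAt (fun z : ℂ => cos ((Real.pi:ℂ)*(μ + I*z))) 0 := by fun_prop
    have c2 : ContinuousAt (fun z : ℂ => Gamma (μ + 1/2 + I*z)) 0 :=
      (ld_Gamma (μ + 1/2) I (half_ne μ hμ)).continuousAt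
    have c3 : ContinuousAt (fun z : ℂ => 1/2 - μ - I*z) 0 := by fun_prop
    have hh : 1/2 - μ ≠ 0 := by
      intro h
      exact hμ ⟨0, by push_cast; linear_combination -h⟩
    filter_upwards [self_mem_nhdsWithin,
      hcast'.eventually (c1.eventually_ne (y := 0) (by simpa using hc)),
      hcast'.eventually (c2.eventually_ne (y := 0) (by simpa only [mul_zero, add_zero] using hg)),
      hcast'.eventually (c3.eventually_ne (y := 0) (by simpa only [mul_zero, sub_zero] using hh))] with ν h1 h2 h3 h4
    exact E_eq_reg μ p01 px1 ν h1 h2 h3 h4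
  constructor
  · have := hd.continuousAt.tendsto.comp hcast'
    rw [h0] at this
    refine this.congr' ?_
    filter_upwards [hev] with ν h
    exact h.symm
  · have hlog := hd.clog (by rw [h0]; exact one_mem_slitPlane)
    rw [h0, div_one] at hlog
    have := ((hasDerivAt_iff_tendsto_slope.mp hlog).comp hcast).const_mul (I/2)
    have hl16 : (Real.log 16 : ℂ) = 4 * (Real.log 2 : ℂ) := by
      rw [show (16:ℝ) = 2^4 by norm_num, Real.log_pow]; push_cast; ring
    refine (this.congr' ?_).trans (le_of_eq ?_)
    · filter_upwards [hev] with ν h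
      simp only [Function.comp, slope_def_field, h, h0, log_one, sub_zero]
      ring
    · congr 1
      rw [hl16]
      field_simp
      ring_nf
      simp only [I_sq]
      ring
end

section
/- Define the power series F(z) := Σ_{n≥0} ((1/2)_n / n!)²·zⁿ and F₁(z) := Σ_{n≥0} ((1/2)_n / n!)²·( 4·Σ_{k=1}^{n} 1/(2k−1) − 2·Σ_{k=1}^{n} 1/k − 4·ln 2 )·zⁿ, where (1/2)_n := Π_{j=0}^{n−1}(1/2 + j); both series converge for |z| < 1. Then there exist ρ > 0 and a function ξ, analytic on the disk |x| < ρ with ξ(0) = 0, satisfying ξ(x) = (x/16)·exp( −F₁(ξ(x))/F(ξ(x)) ) for all |x| < ρ, and whose Taylor expansion at 0 begins ξ(x) = x − (1/2)x² + (11/64)x³ − (3/64)x⁴ + O(x⁵). -/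
open Complex Asymptotics

/-- The Pochhammer symbol `(1/2)_n = ∏_{j=0}^{n−1}(1/2 + j)`. -/
noncomputable def poch (n : ℕ) : ℝ := ∏ j ∈ Finset.range n, ((1:ℝ)/2 + j)

/-- `F(z) = Σ_{n≥0} ((1/2)_n/n!)²·zⁿ`, i.e. the hypergeometric function `F(1/2,1/2,1;z)`. -/
noncomputable def F (z : ℂ) : ℂ :=
  ∑' n : ℕ, ((poch n / n.factorial)^2 : ℝ) * z^n

/-- `F₁(z) = Σ_{n≥0} ((1/2)_n/n!)²·(4Σ_{k=1}^n 1/(2k−1) − 2Σ_{k=1}^n 1/k − 4ln2)·zⁿ`. -/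
noncomputable def F₁ (z : ℂ) : ℂ :=
  ∑' n : ℕ, (((poch n / n.factorial)^2 *
    (4*(∑ k ∈ Finset.Icc 1 n, 1/(2*(k:ℝ) - 1)) - 2*(∑ k ∈ Finset.Icc 1 n, 1/(k:ℝ))
      - 4*Real.log 2) : ℝ)) * z^n

lemma cont_O_one {f : ℂ → ℂ} (h : ContinuousAt f 0) : f =O[nhds 0] (fun _ => (1:ℂ)) :=
  h.tendsto.isBigO_one ℂ

lemma ser_fps (a : ℕ → ℝ) (C : ℝ) (h : ∀ n, |a n| ≤ C * 2^n) :
    HasFPowerSeriesAt (fun z : ℂ => ∑' n : ℕ, (a n : ℂ) * z^n)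
      (FormalMultilinearSeries.ofScalars ℂ (fun n => (a n : ℂ))) 0 := by
  rw [hasFPowerSeriesAt_iff]
  filter_upwards [Metric.ball_mem_nhds (0:ℂ) (show (0:ℝ) < 1/2 by norm_num)] with z hz
  have hz' : ‖z‖ < 1/2 := by simpa using hz
  simp only [FormalMultilinearSeries.coeff_ofScalars, zero_add, smul_eq_mul]
  have hs : Summable (fun n : ℕ => (a n : ℂ) * z^n) := by
    refine Summable.of_norm_bounded (g := fun n => C * (2 * ‖z‖)^n) ?_ ?_
    · exact (summable_geometric_of_lt_one (by positivity) (by linarith)).mul_left C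
    · intro n
      rw [norm_mul, norm_pow, Complex.norm_real, Real.norm_eq_abs, mul_pow, ← mul_assoc]
      gcongr
      exact h n
  simpa [mul_comm] using hs.hasSum

lemma ser_big (a : ℕ → ℝ) (C : ℝ) (h : ∀ n, |a n| ≤ C * 2^n) :
    (fun z : ℂ => (∑' n : ℕ, (a n : ℂ) * z^n) - (a 0 + a 1 * z + a 2 * z^2 + a 3 * z^3))
      =O[nhds 0] (fun z : ℂ => z^4) := by
  have := (ser_fps a C h).isBigO_sub_partialSum_pow 4
  simp only [← norm_pow] at this
  have h2 := this.of_norm_right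
  refine h2.congr_left ?_
  intro z
  simp [FormalMultilinearSeries.partialSum, Finset.sum_range_succ]
  ring

lemma poch_bd (n : ℕ) : |(poch n / n.factorial)^2| ≤ 1 := by
  have h0 : 0 ≤ poch n := Finset.prod_nonneg (fun j _ => by positivity)
  have h1 : poch n ≤ n.factorial := by
    induction n with
    | zero => simp [poch]
    | succ n ih =>
      have h0 : 0 ≤ poch n := Finset.prod_nonneg (fun j _ => by positivity)
      have : poch (n+1) = poch n * (1/2 + n) := by simp [poch, Finset.prod_range_succ]
      rw [this, Nat.factorial_succ]
      push_cast
      rw [mul_comm]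
      exact mul_le_mul (by linarith) (ih h0) h0 (by positivity)
  have h2 : poch n / n.factorial ≤ 1 := div_le_one_of_le₀ h1 (by positivity)
  have h3 : 0 ≤ poch n / n.factorial := by positivity
  rw [abs_of_nonneg (by positivity)]
  exact pow_le_one₀ h3 h2

lemma nat_le_two_pow (n : ℕ) : (n:ℝ) ≤ 2^n := by
  exact_mod_cast (Nat.lt_two_pow_self (n := n)).le

lemma cf0 (n : ℕ) : |(poch n / n.factorial)^2| ≤ 1 * (2:ℝ)^n := by
  rw [one_mul]
  exact (poch_bd n).trans (one_le_pow₀ (by norm_num))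

lemma cf1 (n : ℕ) : |(poch n / n.factorial)^2 *
    (4*(∑ k ∈ Finset.Icc 1 n, 1/(2*(k:ℝ) - 1)) - 2*(∑ k ∈ Finset.Icc 1 n, 1/(k:ℝ))
      - 4*Real.log 2)| ≤ 10 * (2:ℝ)^n := by
  rw [abs_mul]
  have hA : ∑ k ∈ Finset.Icc 1 n, 1/(2*(k:ℝ) - 1) ≤ n := by
    refine (Finset.sum_le_card_nsmul _ _ 1 ?_).trans (by simp)
    intro k hk
    have : (1:ℝ) ≤ k := by exact_mod_cast (Finset.mem_Icc.1 hk).1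
    rw [div_le_one (by linarith)]; linarith
  have hA0 : 0 ≤ ∑ k ∈ Finset.Icc 1 n, 1/(2*(k:ℝ) - 1) := by
    refine Finset.sum_nonneg ?_
    intro k hk
    have : (1:ℝ) ≤ k := by exact_mod_cast (Finset.mem_Icc.1 hk).1
    exact div_nonneg zero_le_one (by linarith)
  have hB : ∑ k ∈ Finset.Icc 1 n, 1/(k:ℝ) ≤ n := by
    refine (Finset.sum_le_card_nsmul _ _ 1 ?_).trans (by simp)
    intro k hk
    have : (1:ℝ) ≤ k := by exact_mod_cast (Finset.mem_Icc.1 hk).1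
    rw [div_le_one (by linarith)]; linarith
  have hB0 : 0 ≤ ∑ k ∈ Finset.Icc 1 n, 1/(k:ℝ) := Finset.sum_nonneg (fun k _ => by positivity)
  have hL : Real.log 2 ≤ 1 := by linarith [Real.log_two_lt_d9]
  have hL0 : 0 ≤ Real.log 2 := Real.log_nonneg (by norm_num)
  have hn := nat_le_two_pow n
  have h1 : (1:ℝ) ≤ 2^n := one_le_pow₀ (by norm_num)
  refine (mul_le_of_le_one_left (abs_nonneg _) (poch_bd n)).trans ?_
  rw [abs_le]
  constructor <;> linarith

lemma F_an : AnalyticAt ℂ F 0 := ⟨_, ser_fps _ 1 cf0⟩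
lemma F1_an : AnalyticAt ℂ F₁ 0 := ⟨_, ser_fps _ 10 cf1⟩

lemma F_big : (fun z : ℂ => F z - (1 + z/4 + 9/64*z^2 + 25/256*z^3)) =O[nhds 0]
    (fun z : ℂ => z^4) := by
  refine (ser_big _ 1 cf0).congr_left ?_
  intro z
  simp [F, poch, Finset.prod_range_succ, Nat.factorial]
  ring

lemma F1_big : (fun z : ℂ => F₁ z - (-4*(Real.log 2:ℂ) + 1/4*(2-4*(Real.log 2:ℂ))*z
      + 9/64*(7/3-4*(Real.log 2:ℂ))*z^2
      + 25/256*(37/15-4*(Real.log 2:ℂ))*z^3)) =O[nhds 0]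
    (fun z : ℂ => z^4) := by
  refine (ser_big _ 10 cf1).congr_left ?_
  intro z
  have e2 : Finset.Icc 1 2 = ({1,2} : Finset ℕ) := by decide
  have e3 : Finset.Icc 1 3 = ({1,2,3} : Finset ℕ) := by decide
  unfold F₁
  congr 1
  push_cast
  simp [poch, Finset.prod_range_succ, Nat.factorial, e2, e3]
  ring

lemma F_zero : F 0 = 1 := by
  unfold F
  rw [tsum_eq_single 0]
  · simp [poch]
  · intro n hn; simp [hn]

lemma F1_zero : F₁ 0 = -4*(Real.log 2:ℂ) := by
  unfold F₁
  rw [tsum_eq_single 0]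
  · simp [poch]
  · intro n hn; simp [hn]

lemma pow_O (n : ℕ) (hn : 4 ≤ n) : (fun z : ℂ => z^n) =O[nhds 0] (fun z : ℂ => z^4) := by
  rcases hn.eq_or_lt with h | h
  · subst h; exact isBigO_refl _ _
  · exact (isLittleO_pow_pow h).isBigO

/-- The quotient has the expected expansion. -/
lemma G_big : (fun z : ℂ => (F₁ z / F z + 4*(Real.log 2:ℂ)) - (z/2+13/64*z^2+23/192*z^3))
    =O[nhds 0] (fun z : ℂ => z^4) := by
  have hF : ContinuousAt F 0 := F_an.continuousAt
  have hne : ∀ᶠ z in nhds (0:ℂ), F z ≠ 0 :=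
    hF.eventually_ne (by rw [F_zero]; exact one_ne_zero)
  have hb : (fun z => (F z)⁻¹) =O[nhds (0:ℂ)] (fun _ => (1:ℂ)) :=
    (hF.inv₀ (by rw [F_zero]; exact one_ne_zero)).tendsto.isBigO_one ℂ
  have hc : (fun z : ℂ => 4*(Real.log 2:ℂ) - (z/2+13/64*z^2+23/192*z^3)) =O[nhds (0:ℂ)]
      (fun _ => (1:ℂ)) := by
    apply cont_O_one
    fun_prop
  have hd : (fun z : ℂ => z^4 * (-(1/2*25/256 + 13/64*9/64+23/192/4)
      - (13/64*25/256+23/192*9/64)*z - 23/192*25/256*z^2)) =O[nhds (0:ℂ)]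
      (fun z : ℂ => z^4) := by
    have : (fun z : ℂ => (-(1/2*25/256 + 13/64*9/64+23/192/4)
      - (13/64*25/256+23/192*9/64)*z - 23/192*25/256*z^2)) =O[nhds (0:ℂ)]
      (fun _ => (1:ℂ)) := by
      apply cont_O_one
      fun_prop
    simpa using (isBigO_refl (fun z : ℂ => z^4) (nhds 0)).mul this
  have key := hb.mul ((F1_big.add (by simpa only [one_mul] using hc.mul F_big)).add hd)
  simp only [one_mul] at key
  refine key.congr' ?_ Filter.EventuallyEq.rfl
  filter_upwards [hne] with z hz
  field_simp
  ring

lemma exp_big : (fun z : ℂ => 16 * exp (F₁ z / F z) - (1 + z/2+21/64*z^2+31/128*z^3))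
    =O[nhds 0] (fun z : ℂ => z^4) := by
  set G : ℂ → ℂ := fun z => F₁ z / F z + 4*(Real.log 2:ℂ) with hG
  set T : ℂ → ℂ := fun z => z/2+13/64*z^2+23/192*z^3 with hT
  have hGT : (fun z => G z - T z) =O[nhds 0] (fun z : ℂ => z^4) := G_big
  have cG : ContinuousAt G 0 := by
    have h := (F1_an.div F_an (by rw [F_zero]; exact one_ne_zero)).continuousAt
    exact h.add continuousAt_const
  have G0 : G 0 = 0 := by simp [hG, F_zero, F1_zero]
  have cT : ContinuousAt T 0 := by simp only [hT]; fun_prop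
  have hz : (fun z : ℂ => z^4) =O[nhds 0] (fun z : ℂ => z) := by
    simpa using (isLittleO_pow_pow (𝕜 := ℂ) (show 1 < 4 by norm_num)).isBigO
  have hTz : T =O[nhds 0] (fun z : ℂ => z) := by
    have : (fun z : ℂ => (1/2+13/64*z+23/192*z^2)) =O[nhds (0:ℂ)] (fun _ => (1:ℂ)) := by
      apply cont_O_one
      fun_prop
    refine ((isBigO_refl (fun z : ℂ => z) (nhds 0)).mul this).congr ?_ ?_
    · intro z; simp only [hT]; ring
    · intro z; simp
  have hGz : G =O[nhds 0] (fun z : ℂ => z) :=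
    ((hGT.trans hz).add hTz).congr_left (fun z => by ring)
  have h1 : (fun z => exp (G z) - ∑ i ∈ Finset.range 4, (G z)^i / (i.factorial : ℂ)) =O[nhds 0]
      (fun z : ℂ => z^4) := by
    have := (Complex.exp_sub_sum_range_isBigO_pow 4).comp_tendsto
      (show Filter.Tendsto G (nhds 0) (nhds 0) by simpa [G0, ContinuousAt] using cG)
    exact this.trans (hGz.pow 4)
  have h2 : (fun z => (G z - T z) * (1 + (G z + T z)/2 + ((G z)^2 + G z * T z + (T z)^2)/6))
      =O[nhds 0] (fun z : ℂ => z^4) := by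
    have : (fun z => (1 + (G z + T z)/2 + ((G z)^2 + G z * T z + (T z)^2)/6))
      =O[nhds 0] (fun _ => (1:ℂ)) := by
      apply cont_O_one
      fun_prop
    simpa using hGT.mul this
  have h3 : (fun z => 1 + T z + (T z)^2/2 + (T z)^3/6 - (1 + z/2+21/64*z^2+31/128*z^3))
      =O[nhds 0] (fun z : ℂ => z^4) := by
    have : (fun z : ℂ => (2603/24576)*z^0 + (813/16384)*z^1 + (97855/4718592)*z^2 + (28589/4718592)*z^3 + (6877/4718592)*z^4 + (12167/42467328)*z^5)
      =O[nhds 0] (fun _ => (1:ℂ)) := by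
      apply cont_O_one
      fun_prop
    refine ((isBigO_refl (fun z : ℂ => z^4) (nhds 0)).mul this).congr ?_ ?_
    · intro z; simp only [hT]; ring
    · intro z; simp
  refine ((h1.add h2).add h3).congr_left ?_
  intro z
  have : exp (G z) = 16 * exp (F₁ z / F z) := by
    simp only [hG]
    rw [Complex.exp_add]
    have : exp (4*(Real.log 2:ℂ)) = 16 := by
      have : (4*(Real.log 2:ℂ)) = ((4 * Real.log 2 : ℝ) : ℂ) := by push_cast; ring
      rw [this, ← Complex.ofReal_exp, mul_comm, Real.exp_mul, Real.exp_log (by norm_num)]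
      norm_num
    rw [this]; ring
  rw [← this]
  simp [Finset.sum_range_succ, Nat.factorial]
  ring


noncomputable def phi (z : ℂ) : ℂ := z * (16 * exp (F₁ z / F z))

lemma E_an : AnalyticAt ℂ (fun z => 16 * exp (F₁ z / F z)) 0 :=
  analyticAt_const.mul (F1_an.div F_an (by rw [F_zero]; exact one_ne_zero)).cexp

lemma phi_an : AnalyticAt ℂ phi 0 := analyticAt_id.mul E_an

lemma E_zero : 16 * exp (F₁ 0 / F 0) = 1 := by
  rw [F_zero, F1_zero]
  have : (-4*(Real.log 2:ℂ)) / 1 = ((Real.log 2 * (-4) : ℝ) : ℂ) := by push_cast; ring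
  rw [this, ← Complex.ofReal_exp, Real.exp_mul, Real.exp_log (by norm_num)]
  norm_num [Real.rpow_neg]

lemma phi_deriv : deriv phi 0 = 1 := by
  have h := (hasDerivAt_id (0:ℂ)).mul E_an.differentiableAt.hasDerivAt
  have h2 := h.deriv
  simp only [id, zero_mul, one_mul, add_zero, E_zero] at h2
  exact h2

lemma phi_zero : phi 0 = 0 := by simp [phi]

lemma phi_big : (fun z : ℂ => phi z - (z + z^2/2+21/64*z^3+31/128*z^4)) =O[nhds 0]
    (fun z : ℂ => z^5) := by
  refine ((isBigO_refl (fun z : ℂ => z) (nhds 0)).mul exp_big).congr ?_ ?_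
  · intro z; simp only [phi]; ring
  · intro z; ring

lemma poly_big : (fun x : ℂ => phi (x - x^2/2 + 11*x^3/64 - 3*x^4/64) - x) =O[nhds 0]
    (fun x : ℂ => x^5) := by
  have hp : Filter.Tendsto (fun x : ℂ => x - x^2/2 + 11*x^3/64 - 3*x^4/64) (nhds 0) (nhds 0) := by
    have : ContinuousAt (fun x : ℂ => x - x^2/2 + 11*x^3/64 - 3*x^4/64) 0 := by fun_prop
    simpa [ContinuousAt] using this
  have hpz : (fun x : ℂ => x - x^2/2 + 11*x^3/64 - 3*x^4/64) =O[nhds 0] (fun x : ℂ => x) := by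
    have : (fun z : ℂ => (1 - z/2 + 11*z^2/64 - 3*z^3/64)) =O[nhds (0:ℂ)] (fun _ => (1:ℂ)) := by
      apply cont_O_one
      fun_prop
    refine ((isBigO_refl (fun z : ℂ => z) (nhds 0)).mul this).congr ?_ ?_
    · intro z; ring
    · intro z; simp
  have h1 := (phi_big.comp_tendsto hp).trans (hpz.pow 5)
  have h2 : (fun x : ℂ => x^5 * ((-827/4096)*x^0 + (2553/8192)*x^1 + (-80425/262144)*x^2 + (110215/524288)*x^3 + (-1836305/16777216)*x^4 + (763189/16777216)*x^5 + (-127159/8388608)*x^6 + (8773615/2147483648)*x^7 + (-471975/536870912)*x^8 + (154845/1073741824)*x^9 + (-9207/536870912)*x^10 + (2511/2147483648)*x^11)) =O[nhds 0] (fun x : ℂ => x^5) := by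
    have : (fun x : ℂ => (-827/4096)*x^0 + (2553/8192)*x^1 + (-80425/262144)*x^2 + (110215/524288)*x^3 + (-1836305/16777216)*x^4 + (763189/16777216)*x^5 + (-127159/8388608)*x^6 + (8773615/2147483648)*x^7 + (-471975/536870912)*x^8 + (154845/1073741824)*x^9 + (-9207/536870912)*x^10 + (2511/2147483648)*x^11)
      =O[nhds 0] (fun _ => (1:ℂ)) := by
      apply cont_O_one
      fun_prop
    simpa using (isBigO_refl (fun z : ℂ => z^5) (nhds 0)).mul this
  refine (h1.add h2).congr_left ?_
  intro x
  simp only [Function.comp]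
  ring

/-- there exist `ρ > 0` and a function `ξ`, analytic on `|x| < ρ` with
`ξ(0) = 0`, satisfying the fixed point equation `ξ(x) = (x/16)·exp(−F₁(ξ(x))/F(ξ(x)))`
for `|x| < ρ`, whose Taylor expansion at `0` begins
`ξ(x) = x − x²/2 + 11x³/64 − 3x⁴/64 + O(x⁵)`. -/
theorem stmt_18 :
    ∃ ρ > (0:ℝ), ∃ ξ : ℂ → ℂ,
      AnalyticOn ℂ ξ (Metric.ball 0 ρ) ∧ ξ 0 = 0 ∧
      (∀ x ∈ Metric.ball (0:ℂ) ρ,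
        ξ x = x/16 * Complex.exp (-(F₁ (ξ x)) / F (ξ x))) ∧
      (fun x : ℂ => ξ x - (x - x^2/2 + 11*x^3/64 - 3*x^4/64)) =O[nhds 0]
        (fun x : ℂ => x^5) := by
  have hd : deriv phi 0 ≠ 0 := by rw [phi_deriv]; exact one_ne_zero
  obtain ⟨g, hg, hl, hr⟩ : ∃ g : ℂ → ℂ, AnalyticAt ℂ g 0 ∧ (∀ᶠ x in nhds 0, g (phi x) = x) ∧
      (∀ᶠ x in nhds 0, phi (g x) = x) := by
    refine ⟨phi_an.hasStrictDerivAt.localInverse _ _ _ hd, ?_, ?_, ?_⟩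
    · have := phi_an.analyticAt_localInverse hd
      rwa [phi_zero] at this
    · exact HasStrictDerivAt.eventually_left_inverse _ hd
    · have := HasStrictDerivAt.eventually_right_inverse phi_an.hasStrictDerivAt hd
      rwa [phi_zero] at this
  have hg0 : g 0 = 0 := by simpa [phi_zero] using hl.self_of_nhds
  obtain ⟨ρ, hρ, hb⟩ := Metric.eventually_nhds_iff_ball.1 (hg.eventually_analyticAt.and hr)
  refine ⟨ρ, hρ, g, fun x hx => (hb x hx).1.analyticWithinAt, hg0, ?_, ?_⟩
  · intro x hx
    have h := (hb x hx).2
    have he : exp (F₁ (g x) / F (g x)) * exp (-(F₁ (g x)) / F (g x)) = 1 := by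
      rw [← Complex.exp_add, neg_div, add_neg_cancel, Complex.exp_zero]
    unfold phi at h
    linear_combination (-(g x)) * he + exp (-(F₁ (g x)) / F (g x)) / 16 * h
  · have hp : Filter.Tendsto (fun x : ℂ => x - x^2/2 + 11*x^3/64 - 3*x^4/64)
        (nhds 0) (nhds 0) := by
      have : ContinuousAt (fun x : ℂ => x - x^2/2 + 11*x^3/64 - 3*x^4/64) 0 := by fun_prop
      simpa [ContinuousAt] using this
    have hphi : Filter.Tendsto (fun x : ℂ => phi (x - x^2/2 + 11*x^3/64 - 3*x^4/64))
        (nhds 0) (nhds 0) := by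
      have := phi_an.continuousAt.tendsto
      rw [phi_zero] at this
      exact this.comp hp
    have hs := hg.hasStrictDerivAt.hasStrictFDerivAt.isBigO_sub
    have ht : Filter.Tendsto
        (fun x : ℂ => (x, phi (x - x^2/2 + 11*x^3/64 - 3*x^4/64))) (nhds 0) (nhds (0,0)) :=
      Filter.Tendsto.prodMk_nhds Filter.tendsto_id hphi
    have h1 := (hs.comp_tendsto ht).trans (poly_big.neg_left.congr_left
      (fun x => show _ = x - phi (x - x^2/2 + 11*x^3/64 - 3*x^4/64) by ring))
    refine h1.congr' ?_ Filter.EventuallyEq.rfl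
    filter_upwards [hp.eventually hl] with x hx
    simp only [Function.comp, hx]
end

section
/- Let μ ∈ ℂ, let ν be a nonzero real number, and let φ ∈ ℂ, with 2μ−1 ≠ 2iν and 2μ−1 ≠ −2iν. Then there exist ε ∈ (0, 1), C > 0, and a holomorphic function u on the slit punctured disk D := { x ∈ ℂ : 0 < |x| < ε and |arg x| < π } (arg the principal argument) such that: (i) for every x ∈ D, ‖u(x) − ( 1 − ((4ν² + (2μ−1)²)/(4ν²))·sin²( ν·Log x + φ/2 − π/4 ) )‖ ≤ C·|x|, where Log is the principal branch of the complex logarithm; and (ii) for every x ∈ D at which u(x) ∉ {0, 1, 1/x}, the function y := 1/u is twice complex-differentiable near x and satisfies the Painlevé VI equation PVI_μ at x: y'' = (1/2)·(1/y + 1/(y−1) + 1/(y−x))·(y')² − (1/x + 1/(x−1) + 1/(y−x))·y' + (1/2)·( y(y−1)(y−x)/(x²(x−1)²) )·( (2μ−1)² + x(x−1)/(y−x)² ). -/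
open Complex

section Fixed
set_option linter.unusedSectionVars false
open MeasureTheory Filter Topology Set

variable {E : Type*} [NormedAddCommGroup E] [NormedSpace ℂ E] [CompleteSpace E]

/-- The averaging operator solving `V' + V = f`. -/
noncomputable def expAvg (f : ℂ → E) (z : ℂ) : E :=
  ∫ s in Iic (0:ℝ), ((Real.exp s : ℝ) : ℂ) • f (z + s)

theorem expAvg_aux_cont {U : Set ℂ}
    (hL : ∀ z ∈ U, ∀ s : ℝ, s ≤ 0 → z + s ∈ U) {f : ℂ → E} (hf : ContinuousOn f U)
    {z : ℂ} (hz : z ∈ U) :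
    ContinuousOn (fun s : ℝ => ((Real.exp s : ℝ) : ℂ) • f (z + s)) (Iic 0) := by
  apply ContinuousOn.smul
  · fun_prop
  · exact hf.comp (by fun_prop) (fun s hs => hL z hz s hs)

theorem expAvg_aux_int {U : Set ℂ}
    (hL : ∀ z ∈ U, ∀ s : ℝ, s ≤ 0 → z + s ∈ U) {f : ℂ → E} (hf : ContinuousOn f U)
    {B : ℝ} (hB : ∀ z ∈ U, ‖f z‖ ≤ B) {z : ℂ} (hz : z ∈ U) :
    IntegrableOn (fun s : ℝ => ((Real.exp s : ℝ) : ℂ) • f (z + s)) (Iic 0) := by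
  refine Integrable.mono' ((integrableOn_exp_Iic 0).mul_const B)
    ((expAvg_aux_cont hL hf hz).aestronglyMeasurable measurableSet_Iic) ?_
  refine (ae_restrict_iff' measurableSet_Iic).2 (Eventually.of_forall fun s hs => ?_)
  rw [norm_smul, Complex.norm_real, Real.norm_eq_abs, abs_of_pos (Real.exp_pos s)]
  exact mul_le_mul_of_nonneg_left (hB _ (hL z hz s hs)) (Real.exp_pos s).le

theorem expAvg_norm_le {U : Set ℂ}
    (hL : ∀ z ∈ U, ∀ s : ℝ, s ≤ 0 → z + s ∈ U) {f : ℂ → E}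
    {B : ℝ} (hB : ∀ z ∈ U, ‖f z‖ ≤ B) {z : ℂ} (hz : z ∈ U) :
    ‖expAvg f z‖ ≤ B := by
  have h : ‖expAvg f z‖ ≤ ∫ s in Iic (0:ℝ), Real.exp s * B := by
    refine norm_integral_le_of_norm_le ((integrableOn_exp_Iic 0).mul_const B) ?_
    refine (ae_restrict_iff' measurableSet_Iic).2 (Eventually.of_forall fun s hs => ?_)
    rw [norm_smul, Complex.norm_real, Real.norm_eq_abs, abs_of_pos (Real.exp_pos s)]
    exact mul_le_mul_of_nonneg_left (hB _ (hL z hz s hs)) (Real.exp_pos s).le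
  rw [integral_mul_const, integral_exp_Iic_zero, one_mul] at h
  exact h

theorem expAvg_sub {U : Set ℂ}
    (hL : ∀ z ∈ U, ∀ s : ℝ, s ≤ 0 → z + s ∈ U) {f g : ℂ → E} (hf : ContinuousOn f U)
    (hg : ContinuousOn g U)
    {B : ℝ} (hB : ∀ z ∈ U, ‖f z‖ ≤ B) (hB' : ∀ z ∈ U, ‖g z‖ ≤ B) {z : ℂ} (hz : z ∈ U) :
    expAvg f z - expAvg g z = expAvg (fun w => f w - g w) z := by
  unfold expAvg
  rw [← integral_sub (expAvg_aux_int hL hf hB hz) (expAvg_aux_int hL hg hB' hz)]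
  simp only [smul_sub]

theorem expAvg_hasDerivAt {U : Set ℂ} (hU : IsOpen U)
    (hL : ∀ z ∈ U, ∀ s : ℝ, s ≤ 0 → z + s ∈ U) {f : ℂ → E} (hf : DifferentiableOn ℂ f U)
    {B : ℝ} (hB : ∀ z ∈ U, ‖f z‖ ≤ B) {z : ℂ} (hz : z ∈ U) :
    HasDerivAt (expAvg f) (f z - expAvg f z) z := by
  obtain ⟨δ, hδ, hball⟩ := Metric.isOpen_iff.1 hU z hz
  have hf' : DifferentiableOn ℂ (deriv f) U := hf.deriv hU
  have hB0 : 0 ≤ B := (norm_nonneg _).trans (hB z hz)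
  have hder : ∀ w ∈ Metric.ball z (δ/2), ∀ s : ℝ, s ≤ 0 → ‖deriv f (w + s)‖ ≤ B / (δ/4) := by
    intro w hw s hs
    have hsub : ∀ v ∈ Metric.closedBall (w + s) (δ/4), v ∈ U := by
      intro v hv
      have h1 : v - s ∈ U := by
        apply hball
        rw [Metric.mem_ball, dist_eq_norm] at hw ⊢
        rw [Metric.mem_closedBall, dist_eq_norm] at hv
        have : v - s - z = (v - (w + s)) + (w - z) := by ring
        rw [this]
        refine (norm_add_le _ _).trans_lt ?_
        linarith
      have := hL _ h1 s hs
      simpa using this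
    apply Complex.norm_deriv_le_of_forall_mem_sphere_norm_le (by positivity)
    · apply DifferentiableOn.diffContOnCl
      rw [closure_ball _ (by positivity)]
      exact hf.mono hsub
    · intro v hv
      exact hB v (hsub v (Metric.sphere_subset_closedBall hv))
  have key := hasDerivAt_integral_of_dominated_loc_of_deriv_le (𝕜 := ℂ)
    (μ := volume.restrict (Iic (0:ℝ))) (s := Metric.ball z (δ/2)) (x₀ := z)
    (F := fun w s => ((Real.exp s : ℝ) : ℂ) • f (w + s))
    (F' := fun w s => ((Real.exp s : ℝ) : ℂ) • deriv f (w + s))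
    (bound := fun s => Real.exp s * (B / (δ/4)))
    (Metric.ball_mem_nhds z (by positivity))
    (by
      filter_upwards [hU.mem_nhds hz] with w hw
      exact (expAvg_aux_cont hL hf.continuousOn hw).aestronglyMeasurable measurableSet_Iic)
    (expAvg_aux_int hL hf.continuousOn hB hz)
    ((expAvg_aux_cont hL hf'.continuousOn hz).aestronglyMeasurable measurableSet_Iic)
    (by
      refine (ae_restrict_iff' measurableSet_Iic).2 (Eventually.of_forall fun s hs w hw => ?_)
      rw [norm_smul, Complex.norm_real, Real.norm_eq_abs, abs_of_pos (Real.exp_pos s)]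
      exact mul_le_mul_of_nonneg_left (hder w hw s hs) (Real.exp_pos s).le)
    ((integrableOn_exp_Iic 0).mul_const _)
    (by
      refine (ae_restrict_iff' measurableSet_Iic).2 (Eventually.of_forall fun s hs w hw => ?_)
      have hwU : w ∈ U := hball (Metric.ball_subset_ball (by linarith) hw)
      have h1 : HasDerivAt f (deriv f (w + s)) (w + s) :=
        (hf.differentiableAt (hU.mem_nhds (hL w hwU s hs))).hasDerivAt
      exact (h1.comp_add_const w (s:ℂ)).const_smul _)
  have hIntegral := key.1
  have hIntegral0 := expAvg_aux_int hL hf.continuousOn hB hz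
  have hd := key.2
  have hibp : ∫ s in Iic (0:ℝ), (((Real.exp s : ℝ) : ℂ) • deriv f (z + s)
      + ((Real.exp s : ℝ) : ℂ) • f (z + s)) = ((Real.exp 0 : ℝ) : ℂ) • f (z + (0:ℝ)) - 0 := by
    apply integral_Iic_of_hasDerivAt_of_tendsto'
      (f := fun s : ℝ => ((Real.exp s : ℝ) : ℂ) • f (z + s))
    · intro s hs
      have h1 : HasDerivAt f (deriv f (z + s)) (z + s) :=
        (hf.differentiableAt (hU.mem_nhds (hL z hz s hs))).hasDerivAt
      have h2 : HasDerivAt (fun t : ℝ => f (z + t)) (deriv f (z + s)) s := by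
        have h4 := HasDerivAt.scomp (h := fun t : ℝ => (t:ℂ)) s
          (h1.comp_const_add z (s:ℂ)) Complex.ofRealCLM.hasDerivAt
        simpa [Function.comp_def] using h4
      have h3 : HasDerivAt (fun t : ℝ => ((Real.exp t : ℝ) : ℂ)) ((Real.exp s : ℝ) : ℂ) s :=
        (Real.hasDerivAt_exp s).ofReal_comp
      exact h3.smul h2
    · exact hIntegral.add hIntegral0
    · apply squeeze_zero_norm' (a := fun s => Real.exp s * B)
      · filter_upwards [eventually_le_atBot (0:ℝ)] with s hs
        rw [norm_smul, Complex.norm_real, Real.norm_eq_abs, abs_of_pos (Real.exp_pos s)]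
        exact mul_le_mul_of_nonneg_left (hB _ (hL z hz s hs)) (Real.exp_pos s).le
      · simpa using Real.tendsto_exp_atBot.mul_const B
  rw [integral_add hIntegral hIntegral0] at hibp
  have heq : f z - expAvg f z = ∫ s in Iic (0:ℝ), ((Real.exp s : ℝ) : ℂ) • deriv f (z + s) := by
    rw [sub_eq_iff_eq_add]
    unfold expAvg
    rw [hibp]
    simp
  rw [heq]
  exact hd

/-- Fixed point lemma. -/
theorem exists_fixed {U : Set ℂ} (hU : IsOpen U)
    (hL : ∀ z ∈ U, ∀ s : ℝ, s ≤ 0 → z + s ∈ U) (N : ℂ → E → E) (M q : ℝ) (hM : 0 ≤ M)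
    (hq0 : 0 ≤ q) (hq1 : q < 1)
    (hN0 : ∀ z ∈ U, ‖N z 0‖ ≤ (1 - q) * M)
    (hNL : ∀ z ∈ U, ∀ v v', ‖v‖ ≤ M → ‖v'‖ ≤ M → ‖N z v - N z v'‖ ≤ q * ‖v - v'‖)
    (hND : ∀ V : ℂ → E, DifferentiableOn ℂ V U → (∀ z ∈ U, ‖V z‖ ≤ M) →
      DifferentiableOn ℂ (fun z => N z (V z)) U) :
    ∃ V : ℂ → E, DifferentiableOn ℂ V U ∧ (∀ z ∈ U, ‖V z‖ ≤ M) ∧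
      ∀ z ∈ U, HasDerivAt V (N z (V z) - V z) z := by
  have hNB : ∀ z ∈ U, ∀ v, ‖v‖ ≤ M → ‖N z v‖ ≤ M := by
    intro z hz v hv
    have h1 := hNL z hz v 0 hv (by simpa using hM)
    have h2 := hN0 z hz
    have h3 : ‖N z v‖ ≤ ‖N z v - N z 0‖ + ‖N z 0‖ := by
      simpa using norm_add_le (N z v - N z 0) (N z 0)
    rw [sub_zero] at h1
    nlinarith [mul_le_mul_of_nonneg_left hv hq0]
  let T : (ℂ → E) → (ℂ → E) := fun V => expAvg (fun z => N z (V z))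
  have hTgood : ∀ V : ℂ → E, DifferentiableOn ℂ V U → (∀ z ∈ U, ‖V z‖ ≤ M) →
      (∀ z ∈ U, HasDerivAt (T V) (N z (V z) - T V z) z) ∧ ∀ z ∈ U, ‖T V z‖ ≤ M := by
    intro V hV hVM
    refine ⟨fun z hz => ?_, fun z hz => ?_⟩
    · exact expAvg_hasDerivAt hU hL (hND V hV hVM) (fun z hz => hNB z hz _ (hVM z hz)) hz
    · exact expAvg_norm_le hL (fun z hz => hNB z hz _ (hVM z hz)) hz
  have hTL : ∀ V W : ℂ → E, DifferentiableOn ℂ V U → (∀ z ∈ U, ‖V z‖ ≤ M) →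
      DifferentiableOn ℂ W U → (∀ z ∈ U, ‖W z‖ ≤ M) → ∀ K : ℝ, (∀ z ∈ U, ‖V z - W z‖ ≤ K) →
      ∀ z ∈ U, ‖T V z - T W z‖ ≤ q * K := by
    intro V W hV hVM hW hWM K hK z hz
    have := expAvg_sub hL (hND V hV hVM).continuousOn (hND W hW hWM).continuousOn
      (fun z hz => hNB z hz _ (hVM z hz)) (fun z hz => hNB z hz _ (hWM z hz)) hz
    change ‖expAvg _ z - expAvg _ z‖ ≤ _
    rw [this]
    apply expAvg_norm_le hL _ hz
    intro w hw
    exact (hNL w hw _ _ (hVM w hw) (hWM w hw)).trans (mul_le_mul_of_nonneg_left (hK w hw) hq0)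
  let S : ℕ → ℂ → E := fun n => T^[n] (fun _ => 0)
  have hS1 : ∀ n, S (n+1) = T (S n) := fun n => Function.iterate_succ_apply' T n _
  have hSg : ∀ n, DifferentiableOn ℂ (S n) U ∧ ∀ z ∈ U, ‖S n z‖ ≤ M := by
    intro n
    induction n with
    | zero => exact ⟨differentiableOn_const _, fun z _ => by simpa [S] using hM⟩
    | succ n ih =>
      rw [hS1]
      have := hTgood _ ih.1 ih.2
      exact ⟨fun z hz => (this.1 z hz).differentiableAt.differentiableWithinAt, this.2⟩
  have hSd : ∀ n, ∀ z ∈ U, ‖S n z - S (n+1) z‖ ≤ M * q ^ n := by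
    intro n
    induction n with
    | zero =>
      intro z hz
      simpa [S] using (hSg 1).2 z hz
    | succ n ih =>
      intro z hz
      rw [hS1 (n+1)]
      nth_rewrite 1 [hS1 n]
      have := hTL _ _ (hSg n).1 (hSg n).2 (hSg (n+1)).1 (hSg (n+1)).2 _ ih z hz
      rw [pow_succ]
      linarith
  have hlim : ∀ z ∈ U, ∃ a, Tendsto (fun n => S n z) atTop (𝓝 a) := by
    intro z hz
    exact cauchySeq_tendsto_of_complete
      (cauchySeq_of_le_geometric q M hq1 (fun n => by rw [dist_eq_norm]; exact hSd n z hz))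
  choose! V hV using hlim
  have hdist : ∀ n, ∀ z ∈ U, ‖S n z - V z‖ ≤ M * q ^ n / (1 - q) := by
    intro n z hz
    rw [← dist_eq_norm]
    exact dist_le_of_le_geometric_of_tendsto q M hq1
      (fun n => by rw [dist_eq_norm]; exact hSd n z hz) (hV z hz) n
  have h0 : Tendsto (fun n : ℕ => M * q ^ n / (1 - q)) atTop (𝓝 0) := by
    have := ((tendsto_pow_atTop_nhds_zero_of_lt_one hq0 hq1).const_mul M).div_const (1 - q)
    simpa using this
  have hunif : TendstoUniformlyOn S V atTop U := by
    rw [Metric.tendstoUniformlyOn_iff]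
    intro ε hε
    filter_upwards [h0.eventually (gt_mem_nhds hε)] with n hn z hz
    rw [dist_comm, dist_eq_norm]
    exact (hdist n z hz).trans_lt hn
  have hVd : DifferentiableOn ℂ V U :=
    hunif.tendstoLocallyUniformlyOn.differentiableOn
      (Eventually.of_forall fun n => (hSg n).1) hU
  have hVM : ∀ z ∈ U, ‖V z‖ ≤ M := fun z hz =>
    le_of_tendsto (hV z hz).norm (Eventually.of_forall fun n => (hSg n).2 z hz)
  have hfix : ∀ z ∈ U, T V z = V z := by
    intro z hz
    have h1 : Tendsto (fun n => S (n+1) z) atTop (𝓝 (V z)) :=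
      (hV z hz).comp (tendsto_add_atTop_nat 1)
    have h2 : Tendsto (fun n => S (n+1) z) atTop (𝓝 (T V z)) := by
      rw [tendsto_iff_norm_sub_tendsto_zero]
      have h3 : Tendsto (fun n : ℕ => q * (M * q ^ n / (1 - q))) atTop (𝓝 0) := by
        simpa using h0.const_mul q
      refine squeeze_zero (fun n => norm_nonneg _) (fun n => ?_) h3
      rw [hS1 n]
      exact hTL _ _ (hSg n).1 (hSg n).2 hVd hVM _ (hdist n) z hz
    exact tendsto_nhds_unique h2 h1
  refine ⟨V, hVd, hVM, fun z hz => ?_⟩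
  have := (hTgood V hVd hVM).1 z hz
  rw [hfix z hz] at this
  refine this.congr_of_eventuallyEq ?_
  filter_upwards [hU.mem_nhds hz] with w hw
  exact (hfix w hw).symm

end Fixed

section System
open Filter Topology Set

/-- half strip -/
def hStrip (ρ : ℝ) : Set ℂ := {z | z.re < ρ ∧ |z.im| < Real.pi}

theorem hStrip_open (ρ : ℝ) : IsOpen (hStrip ρ) :=
  (isOpen_lt Complex.continuous_re continuous_const).inter
    (isOpen_lt (continuous_abs.comp Complex.continuous_im) continuous_const)

theorem hStrip_left (ρ : ℝ) : ∀ z ∈ hStrip ρ, ∀ s : ℝ, s ≤ 0 → z + s ∈ hStrip ρ := by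
  intro z hz s hs
  refine ⟨?_, ?_⟩
  · have := hz.1
    simp only [Complex.add_re, Complex.ofReal_re]
    linarith
  · simpa using hz.2

theorem hStrip_mono {ρ ρ' : ℝ} (h : ρ ≤ ρ') : hStrip ρ ⊆ hStrip ρ' :=
  fun _ hz => ⟨hz.1.trans_le h, hz.2⟩

/-- good family of coefficient functions -/
structure GoodCoef (U : Set ℂ) (L : ℝ) (G : ℂ → ℂ × ℂ × ℂ → ℂ) : Prop where
  bound : ∀ z ∈ U, ∀ X, ‖X‖ ≤ 1 → ‖G z X‖ ≤ L
  lip : ∀ z ∈ U, ∀ X X', ‖X‖ ≤ 1 → ‖X'‖ ≤ 1 → ‖G z X - G z X'‖ ≤ L * ‖X - X'‖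
  diff : ∀ V ⊆ U, ∀ X : ℂ → ℂ × ℂ × ℂ, DifferentiableOn ℂ X V → (∀ z ∈ V, ‖X z‖ ≤ 1) →
    DifferentiableOn ℂ (fun z => G z (X z)) V

theorem exists_system (ρ₀ L : ℝ) (hL1 : 1 ≤ L) (G1 G2 G3 J1 J2 : ℂ → ℂ × ℂ × ℂ → ℂ)
    (hG1 : GoodCoef (hStrip ρ₀) L G1) (hG2 : GoodCoef (hStrip ρ₀) L G2)
    (hG3 : GoodCoef (hStrip ρ₀) L G3) (hJ1 : GoodCoef (hStrip ρ₀) L J1)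
    (hJ2 : GoodCoef (hStrip ρ₀) L J2) :
    ∃ ρ ≤ ρ₀, ∃ C : ℝ, 0 < C ∧ ∃ a b e : ℂ → ℂ, ∀ z ∈ hStrip ρ,
      ‖(a z, b z, e z)‖ ≤ C * Real.exp z.re ∧ ‖(a z, b z, e z)‖ ≤ 1 ∧
      HasDerivAt a (e z * J1 z (a z, b z, e z) + exp z * G1 z (a z, b z, e z)) z ∧
      HasDerivAt b (e z * J2 z (a z, b z, e z) + exp z * G2 z (a z, b z, e z)) z ∧
      HasDerivAt e (exp z * G3 z (a z, b z, e z)) z := by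
  have hL0 : 0 < L := by linarith
  set ρ := min ρ₀ (Real.log (1 / (16 * L^2))) with hρ
  have hρ0 : ρ ≤ ρ₀ := min_le_left _ _
  have hexp : ∀ z ∈ hStrip ρ, ‖exp z‖ ≤ 1 / (16 * L^2) := by
    intro z hz
    rw [Complex.norm_exp]
    have h1 : z.re ≤ Real.log (1 / (16 * L^2)) := hz.1.le.trans (min_le_right _ _)
    calc Real.exp z.re ≤ Real.exp (Real.log (1 / (16 * L^2))) := Real.exp_le_exp.2 h1
      _ = _ := Real.exp_log (by positivity)
  let η : ℝ := 1 / (8 * L)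
  have hη : 0 < η := by positivity
  have hηL : η * L = 1/8 := by simp only [η]; field_simp
  have hη1 : η ≤ 1 := by nlinarith
  let M : ℝ := 16 * L^2
  have hM : 0 < M := by positivity
  let X : ℂ → ℂ × ℂ × ℂ → ℂ × ℂ × ℂ := fun z v =>
    (exp z * v.1, exp z * v.2.1, (η:ℂ) * exp z * v.2.2)
  have hηn : ‖(η:ℂ)‖ = η := by rw [Complex.norm_real, Real.norm_eq_abs, abs_of_pos hη]
  have hXlin : ∀ z v, ‖X z v‖ ≤ ‖exp z‖ * ‖v‖ := by
    intro z v
    have h1 : ‖v.1‖ ≤ ‖v‖ := norm_fst_le v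
    have h2 : ‖v.2.1‖ ≤ ‖v‖ := (norm_fst_le v.2).trans (norm_snd_le v)
    have h3 : ‖v.2.2‖ ≤ ‖v‖ := (norm_snd_le v.2).trans (norm_snd_le v)
    have h0 := norm_nonneg (exp z)
    refine norm_prod_le_iff.2 ⟨?_, norm_prod_le_iff.2 ⟨?_, ?_⟩⟩
    · simp only [X, norm_mul]; gcongr
    · simp only [X, norm_mul]; gcongr
    · simp only [X, norm_mul, hηn]
      calc η * ‖exp z‖ * ‖v.2.2‖ ≤ 1 * ‖exp z‖ * ‖v‖ := by gcongr
        _ = _ := by ring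
  have hXsub : ∀ z v v', X z v - X z v' = X z (v - v') := by
    intro z v v'
    simp only [X, Prod.mk_sub_mk, Prod.fst_sub, Prod.snd_sub]
    ext <;> simp <;> ring
  have hX1 : ∀ z ∈ hStrip ρ, ∀ v, ‖v‖ ≤ M → ‖X z v‖ ≤ 1 := by
    intro z hz v hv
    calc ‖X z v‖ ≤ ‖exp z‖ * ‖v‖ := hXlin z v
      _ ≤ 1 / (16 * L^2) * (16 * L^2) := by gcongr; exact hexp z hz
      _ = 1 := by field_simp
  have hXD : ∀ V : ℂ → ℂ × ℂ × ℂ, DifferentiableOn ℂ V (hStrip ρ) →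
      DifferentiableOn ℂ (fun z => X z (V z)) (hStrip ρ) := by
    intro V hV
    simp only [X]
    fun_prop
  have hsub := hStrip_mono hρ0
  -- Lipschitz bound for a coefficient
  have hGL : ∀ G, GoodCoef (hStrip ρ₀) L G → ∀ z ∈ hStrip ρ, ∀ v v', ‖v‖ ≤ M → ‖v'‖ ≤ M →
      ‖G z (X z v) - G z (X z v')‖ ≤ 1 / (16 * L) * ‖v - v'‖ := by
    intro G hG z hz v v' hv hv'
    calc _ ≤ L * ‖X z v - X z v'‖ := hG.lip z (hsub hz) _ _ (hX1 z hz v hv) (hX1 z hz v' hv')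
      _ ≤ L * (1 / (16 * L^2) * ‖v - v'‖) := by
        rw [hXsub]
        gcongr
        exact (hXlin z _).trans (by gcongr; exact hexp z hz)
      _ = _ := by field_simp
  have hL16 : 1 / (16 * L) ≤ 1 / 16 := by
    rw [div_le_div_iff₀ (by positivity) (by norm_num)]; linarith
  have hJL : ∀ J G, GoodCoef (hStrip ρ₀) L J → GoodCoef (hStrip ρ₀) L G → ∀ z ∈ hStrip ρ,
      ∀ v v', ‖v‖ ≤ M → ‖v'‖ ≤ M →
      ‖((η:ℂ) * v.2.2 * J z (X z v) + G z (X z v)) -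
        ((η:ℂ) * v'.2.2 * J z (X z v') + G z (X z v'))‖ ≤ 1 / 2 * ‖v - v'‖ := by
    intro J G hJ hG z hz v v' hv hv'
    have h1 := hGL J hJ z hz v v' hv hv'
    have h2 := hGL G hG z hz v v' hv hv'
    have h3 : ‖v.2.2 - v'.2.2‖ ≤ ‖v - v'‖ := (norm_snd_le (v - v').2).trans (norm_snd_le (v - v'))
    have h4 : ‖v'.2.2‖ ≤ M := ((norm_snd_le v'.2).trans (norm_snd_le v')).trans hv'
    have h5 := hJ.bound z (hsub hz) _ (hX1 z hz v hv)
    have hn := norm_nonneg (v - v')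
    have e1 : ((η:ℂ) * v.2.2 * J z (X z v) + G z (X z v)) -
        ((η:ℂ) * v'.2.2 * J z (X z v') + G z (X z v')) =
        (η:ℂ) * (v.2.2 - v'.2.2) * J z (X z v) + (η:ℂ) * v'.2.2 * (J z (X z v) - J z (X z v'))
          + (G z (X z v) - G z (X z v')) := by ring
    rw [e1]
    calc _ ≤ ‖(η:ℂ) * (v.2.2 - v'.2.2) * J z (X z v)‖
          + ‖(η:ℂ) * v'.2.2 * (J z (X z v) - J z (X z v'))‖
          + ‖G z (X z v) - G z (X z v')‖ := norm_add₃_le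
      _ ≤ η * ‖v - v'‖ * L + η * M * (1 / (16 * L) * ‖v - v'‖) + 1/16 * ‖v - v'‖ := by
        simp only [norm_mul, hηn]
        gcongr
        exact h2.trans (by gcongr)
      _ = (η * L + (η * L) * (M / (16 * L^2)) + 1/16) * ‖v - v'‖ := by field_simp
      _ ≤ 1/2 * ‖v - v'‖ := by
        rw [hηL]
        have : M / (16 * L^2) = 1 := by simp only [M]; field_simp
        rw [this]
        gcongr
        norm_num
  let N : ℂ → ℂ × ℂ × ℂ → ℂ × ℂ × ℂ := fun z v =>
    ((η:ℂ) * v.2.2 * J1 z (X z v) + G1 z (X z v),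
     (η:ℂ) * v.2.2 * J2 z (X z v) + G2 z (X z v), (η:ℂ)⁻¹ * G3 z (X z v))
  have hηinv : ‖(η:ℂ)⁻¹‖ = 8 * L := by
    rw [norm_inv, hηn]; simp only [η]; field_simp
  have hX0 : ∀ z, X z 0 = 0 := by intro z; simp [X]
  obtain ⟨V, hVd, hVM, hV⟩ := exists_fixed (hStrip_open ρ) (hStrip_left ρ) N M (1/2) hM.le
    (by norm_num) (by norm_num)
    (by
      intro z hz
      have b1 := hG1.bound z (hsub hz) 0 (by simp)
      have b2 := hG2.bound z (hsub hz) 0 (by simp)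
      have b3 := hG3.bound z (hsub hz) 0 (by simp)
      have hLM : L ≤ (1 - 1/2) * M := by simp only [M]; nlinarith
      refine norm_prod_le_iff.2 ⟨?_, norm_prod_le_iff.2 ⟨?_, ?_⟩⟩
      · simp only [N, hX0]
        simpa using b1.trans hLM
      · simp only [N, hX0]
        simpa using b2.trans hLM
      · simp only [N, hX0, norm_mul, hηinv]
        calc 8 * L * ‖G3 z 0‖ ≤ 8 * L * L := by gcongr
          _ = _ := by simp only [M]; ring)
    (by
      intro z hz v v' hv hv'
      refine norm_prod_le_iff.2 ⟨hJL J1 G1 hJ1 hG1 z hz v v' hv hv',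
        norm_prod_le_iff.2 ⟨hJL J2 G2 hJ2 hG2 z hz v v' hv hv', ?_⟩⟩
      have := hGL G3 hG3 z hz v v' hv hv'
      simp only [N, Prod.snd_sub]
      rw [← mul_sub, norm_mul, hηinv]
      calc 8 * L * ‖G3 z (X z v) - G3 z (X z v')‖ ≤ 8 * L * (1 / (16 * L) * ‖v - v'‖) := by gcongr
        _ = _ := by field_simp; ring)
    (by
      intro V hV hVM
      have hX := hXD V hV
      have hXb : ∀ z ∈ hStrip ρ, ‖X z (V z)‖ ≤ 1 := fun z hz => hX1 z hz _ (hVM z hz)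
      have d1 := hG1.diff _ hsub _ hX hXb
      have d2 := hG2.diff _ hsub _ hX hXb
      have d3 := hG3.diff _ hsub _ hX hXb
      have d4 := hJ1.diff _ hsub _ hX hXb
      have d5 := hJ2.diff _ hsub _ hX hXb
      have d6 : DifferentiableOn ℂ (fun z => (η:ℂ) * (V z).2.2) (hStrip ρ) := by fun_prop
      exact ((d6.mul d4).add d1).prodMk (((d6.mul d5).add d2).prodMk (d3.const_mul _)))
  refine ⟨ρ, hρ0, M, hM, fun z => (X z (V z)).1, fun z => (X z (V z)).2.1,
    fun z => (X z (V z)).2.2, fun z hz => ?_⟩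
  have hd := hV z hz
  have hd1 : HasDerivAt (fun z => (V z).1) (N z (V z) - V z).1 z := hd.fst
  have hd2 : HasDerivAt (fun z => (V z).2.1) (N z (V z) - V z).2.1 z := hd.snd.fst
  have hd3 : HasDerivAt (fun z => (V z).2.2) (N z (V z) - V z).2.2 z := hd.snd.snd
  have he := Complex.hasDerivAt_exp z
  have hη0 : (η:ℂ) ≠ 0 := by exact_mod_cast hη.ne'
  refine ⟨?_, hX1 z hz _ (hVM z hz), ?_, ?_, ?_⟩
  · calc ‖X z (V z)‖ ≤ ‖exp z‖ * ‖V z‖ := hXlin z _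
      _ ≤ ‖exp z‖ * M := by gcongr; exact hVM z hz
      _ = _ := by rw [Complex.norm_exp]; ring
  · convert! he.mul hd1 using 1
    simp only [N, X, Prod.fst_sub]
    ring
  · convert! he.mul hd2 using 1
    simp only [N, X, Prod.fst_sub, Prod.snd_sub]
    ring
  · convert! (he.const_mul (η:ℂ)).mul hd3 using 1
    simp only [N, X, Prod.snd_sub]
    field_simp
    ring

end System

section Coefs
open Filter Topology Set

/-- phase space of coefficients: `(x, c, s, (a, b, e))` -/
abbrev PSp := ℂ × ℂ × ℂ × (ℂ × ℂ × ℂ)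

/-- the compact convex set on which everything is controlled -/
def KSet (r B : ℝ) : Set PSp :=
  Metric.closedBall 0 r ×ˢ Metric.closedBall 0 B ×ˢ Metric.closedBall 0 B ×ˢ Metric.closedBall 0 1

theorem KSet_convex (r B : ℝ) : Convex ℝ (KSet r B) :=
  (convex_closedBall _ _).prod ((convex_closedBall _ _).prod
    ((convex_closedBall _ _).prod (convex_closedBall _ _)))

theorem KSet_compact (r B : ℝ) : IsCompact (KSet r B) :=
  (isCompact_closedBall _ _).prod ((isCompact_closedBall _ _).prod
    ((isCompact_closedBall _ _).prod (isCompact_closedBall _ _)))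

theorem KSet_bound (r B : ℝ) (H : PSp → ℂ) (hH : ∀ p ∈ KSet r B, ContDiffAt ℂ 1 H p) :
    ∃ L : ℝ, 1 ≤ L ∧ (∀ p ∈ KSet r B, ‖H p‖ ≤ L) ∧
      ∀ p ∈ KSet r B, ∀ p' ∈ KSet r B, ‖H p - H p'‖ ≤ L * ‖p - p'‖ := by
  have h1 : ContDiffOn ℝ 1 H (KSet r B) := fun p hp =>
    ((hH p hp).restrict_scalars ℝ).contDiffWithinAt
  obtain ⟨K, hK⟩ := h1.exists_lipschitzOnWith (by norm_num) (KSet_convex r B) (KSet_compact r B)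
  obtain ⟨C, hC⟩ := (KSet_compact r B).exists_bound_of_continuousOn h1.continuousOn
  refine ⟨max 1 (max K C), le_max_left _ _, fun p hp => (hC p hp).trans ?_, fun p hp p' hp' => ?_⟩
  · exact (le_max_right _ _).trans (le_max_right _ _)
  · have := hK.dist_le_mul p hp p' hp'
    rw [dist_eq_norm, dist_eq_norm] at this
    refine this.trans (mul_le_mul_of_nonneg_right ?_ (norm_nonneg _))
    exact (le_max_left _ _).trans (le_max_right _ _)

theorem GoodCoef.mono {U : Set ℂ} {L L' : ℝ} (h : L ≤ L') {G : ℂ → ℂ × ℂ × ℂ → ℂ}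
    (hG : GoodCoef U L G) : GoodCoef U L' G where
  bound z hz X hX := (hG.bound z hz X hX).trans h
  lip z hz X X' hX hX' := (hG.lip z hz X X' hX hX').trans
    (mul_le_mul_of_nonneg_right h (norm_nonneg _))
  diff := hG.diff

/-- base point -/
noncomputable def bpt (ν κ z : ℂ) (X : ℂ × ℂ × ℂ) : PSp :=
  (exp z, cos (ν * z + κ), sin (ν * z + κ), X)

theorem trig_bound (w : ℂ) : ‖cos w‖ ≤ Real.exp |w.im| ∧ ‖sin w‖ ≤ Real.exp |w.im| := by
  have h1 : ‖exp (w * I)‖ ≤ Real.exp |w.im| := by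
    rw [Complex.norm_exp]
    apply Real.exp_le_exp.2
    simp
    exact neg_le_abs _
  have h2 : ‖exp (-w * I)‖ ≤ Real.exp |w.im| := by
    rw [Complex.norm_exp]
    apply Real.exp_le_exp.2
    simp
    exact le_abs_self _
  constructor
  · rw [Complex.cos, norm_div]
    have := norm_add_le (exp (w * I)) (exp (-w * I))
    rw [Complex.norm_two]
    linarith
  · rw [Complex.sin, norm_div, norm_mul, Complex.norm_I, Complex.norm_two]
    have := norm_sub_le (exp (-w * I)) (exp (w * I))
    linarith

theorem bpt_mem (ν : ℝ) (κ : ℂ) (r : ℝ) (hr : 0 < r) {z : ℂ} (hz : z ∈ hStrip (Real.log r))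
    {X : ℂ × ℂ × ℂ} (hX : ‖X‖ ≤ 1) :
    bpt ν κ z X ∈ KSet r (Real.exp (|ν| * Real.pi + |κ.im|)) := by
  have him : |((ν:ℂ) * z + κ).im| ≤ |ν| * Real.pi + |κ.im| := by
    have : ((ν:ℂ) * z + κ).im = ν * z.im + κ.im := by simp
    rw [this]
    refine (abs_add_le _ _).trans ?_
    rw [abs_mul]
    gcongr
    exact hz.2.le
  have ht := trig_bound ((ν:ℂ) * z + κ)
  have hexp := Real.exp_le_exp.2 him
  refine ⟨?_, ?_, ?_, ?_⟩
  · rw [mem_closedBall_zero_iff]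
    simp only [bpt]
    rw [Complex.norm_exp, ← Real.le_log_iff_exp_le hr]
    exact hz.1.le
  · rw [mem_closedBall_zero_iff]
    exact ht.1.trans hexp
  · rw [mem_closedBall_zero_iff]
    exact ht.2.trans hexp
  · rw [mem_closedBall_zero_iff]
    exact hX

theorem goodCoef_of (ν : ℝ) (κ : ℂ) (r : ℝ) (hr : 0 < r) (H : PSp → ℂ)
    (hH : ∀ p ∈ KSet r (Real.exp (|ν| * Real.pi + |κ.im|)), ContDiffAt ℂ 1 H p) :
    ∃ L : ℝ, 1 ≤ L ∧ GoodCoef (hStrip (Real.log r)) L (fun z X => H (bpt ν κ z X)) := by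
  obtain ⟨L, hL1, hLb, hLl⟩ := KSet_bound _ _ H hH
  refine ⟨L, hL1, ?_, ?_, ?_⟩
  · exact fun z hz X hX => hLb _ (bpt_mem ν κ r hr hz hX)
  · intro z hz X X' hX hX'
    refine (hLl _ (bpt_mem ν κ r hr hz hX) _ (bpt_mem ν κ r hr hz hX')).trans ?_
    apply mul_le_mul_of_nonneg_left _ (by linarith)
    simp [bpt, Prod.norm_def]
  · intro V hV X hX hX1 z hz
    have h1 : DifferentiableAt ℂ H (bpt ν κ z (X z)) :=
      (hH _ (bpt_mem ν κ r hr (hV hz) (hX1 z hz))).differentiableAt (by norm_num)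
    have h2 : DifferentiableWithinAt ℂ (fun z => bpt ν κ z (X z)) V z := by
      have h3 : DifferentiableWithinAt ℂ (fun z => exp z) V z :=
        Complex.differentiable_exp.differentiableAt.differentiableWithinAt
      have h4 : DifferentiableWithinAt ℂ (fun z : ℂ => cos ((ν:ℂ) * z + κ)) V z := by
        have : DifferentiableAt ℂ (fun z : ℂ => (ν:ℂ) * z + κ) z := by fun_prop
        exact this.ccos.differentiableWithinAt
      have h5 : DifferentiableWithinAt ℂ (fun z : ℂ => sin ((ν:ℂ) * z + κ)) V z := by
        have : DifferentiableAt ℂ (fun z : ℂ => (ν:ℂ) * z + κ) z := by fun_prop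
        exact this.csin.differentiableWithinAt
      exact h3.prodMk (h4.prodMk (h5.prodMk (hX z hz)))
    exact h1.comp_differentiableWithinAt z h2

variable (R ν θ : ℂ)

/-- coefficient functions -/
def fw (p : PSp) : ℂ := (R + p.2.2.2.2.1) * p.2.2.1 + p.2.2.2.1 * p.2.1
/-- momentum -/
def fP (p : PSp) : ℂ := ν * ((R + p.2.2.2.2.1) * p.2.1 - p.2.2.2.1 * p.2.2.1)
/-- energy -/
def fE (p : PSp) : ℂ := ν^2 + p.2.2.2.2.2
/-- solution -/
def fu (p : PSp) : ℂ := 1 - (fw R p)^2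
/-- denominator -/
def fq (p : PSp) : ℂ := 1 - p.1 * fu R p
/-- inverse denominator -/
noncomputable def fqi (p : PSp) : ℂ := (fq R p)⁻¹
/-- inverse of `1 - x` -/
noncomputable def fg (p : PSp) : ℂ := (1 - p.1)⁻¹
/-- core -/
noncomputable def fcore (p : PSp) : ℂ :=
  -fg p * ν^2 * fw R p + fg p * fw R p * (2 * fu R p * fE ν p + θ^2/4)
    - fu R p * (fP R ν p + fw R p / 4) * fqi R p
/-- first equation -/
noncomputable def fG1 (p : PSp) : ℂ := p.2.1 * fg p * fP R ν p - p.2.2.1 * ν⁻¹ * fcore R ν θ p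
/-- second equation -/
noncomputable def fG2 (p : PSp) : ℂ := p.2.2.1 * fg p * fP R ν p + p.2.1 * ν⁻¹ * fcore R ν θ p
/-- third equation -/
noncomputable def fG3 (p : PSp) : ℂ :=
  -((2 * (fP R ν p)^2 + fP R ν p * fw R p / 2) * (fqi R p)^2
    - (θ^2/4 + fu R p * fE ν p) * fqi R p)
/-- first coupling -/
noncomputable def fJ1 (p : PSp) : ℂ := p.2.2.1 * ν⁻¹ * fg p * fw R p
/-- second coupling -/
noncomputable def fJ2 (p : PSp) : ℂ := -(p.2.1 * ν⁻¹ * fg p * fw R p)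
/-- constraint -/
noncomputable def fQ (p : PSp) : ℂ := (fP R ν p)^2 - fq R p * (θ^2/4 + fu R p * fE ν p)

theorem cd_fw : ContDiff ℂ 1 (fw R) := by unfold fw; fun_prop
theorem cd_fP : ContDiff ℂ 1 (fP R ν) := by unfold fP; fun_prop
theorem cd_fE : ContDiff ℂ 1 (fE ν) := by unfold fE; fun_prop
theorem cd_fu : ContDiff ℂ 1 (fu R) := by have := cd_fw R; unfold fu; fun_prop
theorem cd_fq : ContDiff ℂ 1 (fq R) := by have := cd_fu R; unfold fq; fun_prop
theorem cd_fQ : ContDiff ℂ 1 (fQ R ν θ) := by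
  have := cd_fu R; have := cd_fq R; have := cd_fP R ν; have := cd_fE ν; unfold fQ; fun_prop

theorem cd_all {p : PSp} (h1 : 1 - p.1 ≠ 0) (h2 : fq R p ≠ 0) :
    ContDiffAt ℂ 1 (fG1 R ν θ) p ∧ ContDiffAt ℂ 1 (fG2 R ν θ) p ∧ ContDiffAt ℂ 1 (fG3 R ν θ) p ∧
    ContDiffAt ℂ 1 (fJ1 R ν) p ∧ ContDiffAt ℂ 1 (fJ2 R ν) p := by
  have a1 := (cd_fw R).contDiffAt (x := p)
  have a2 := (cd_fP R ν).contDiffAt (x := p)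
  have a3 := (cd_fE ν).contDiffAt (x := p)
  have a4 := (cd_fu R).contDiffAt (x := p)
  have a5 := (cd_fq R).contDiffAt (x := p)
  have a6 : ContDiffAt ℂ 1 (fqi R) p := a5.inv h2
  have a7 : ContDiffAt ℂ 1 fg p := by
    have : ContDiffAt ℂ 1 (fun p : PSp => 1 - p.1) p := by fun_prop
    exact this.inv h1
  have a8 : ContDiffAt ℂ 1 (fcore R ν θ) p := by unfold fcore; fun_prop
  refine ⟨?_, ?_, ?_, ?_, ?_⟩
  · unfold fG1; fun_prop
  · unfold fG2; fun_prop
  · unfold fG3; fun_prop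
  · unfold fJ1; fun_prop
  · unfold fJ2; fun_prop

theorem exists_radius (B : ℝ) : ∃ r : ℝ, 0 < r ∧ r < 1 ∧
    ∀ p ∈ KSet r B, 1 - p.1 ≠ 0 ∧ fq R p ≠ 0 := by
  obtain ⟨L, hL1, hL, -⟩ := KSet_bound 1 B (fu R) (fun p _ => (cd_fu R).contDiffAt)
  have hr : 1 / (2 * L) ≤ 1 / 2 := by
    rw [div_le_div_iff₀ (by positivity) (by norm_num)]; linarith
  refine ⟨1 / (2 * L), by positivity, by linarith, fun p hp => ?_⟩
  have hx : ‖p.1‖ ≤ 1 / (2 * L) := by simpa using hp.1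
  have hp1 : p ∈ KSet 1 B := ⟨by
    rw [mem_closedBall_zero_iff]; linarith, hp.2⟩
  have hu := hL p hp1
  constructor
  · intro h
    have : p.1 = 1 := (sub_eq_zero.1 h).symm
    rw [this, norm_one] at hx
    linarith
  · intro h
    have h3 : p.1 * fu R p = 1 := (sub_eq_zero.1 h).symm
    have h4 : ‖p.1‖ * ‖fu R p‖ = 1 := by rw [← norm_mul, h3, norm_one]
    have h5 : ‖p.1‖ * ‖fu R p‖ ≤ 1 / (2 * L) * L := by gcongr
    have h6 : 1 / (2 * L) * L = 1 / 2 := by field_simp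
    linarith

end Coefs

section Sol
open Filter Topology Set

theorem hStrip_convex (ρ : ℝ) : Convex ℝ (hStrip ρ) := by
  have h : hStrip ρ = {z : ℂ | z.re < ρ} ∩ ({z : ℂ | -Real.pi < z.im} ∩ {z : ℂ | z.im < Real.pi}) := by
    ext z; simp [hStrip, abs_lt]
  rw [h]
  exact (convex_halfSpace_re_lt ρ).inter ((convex_halfSpace_im_gt _).inter (convex_halfSpace_im_lt _))

theorem exists_sol (R θ κ : ℂ) (ν : ℝ) (hν : ν ≠ 0) (hR : R^2 * (ν:ℂ)^2 = (ν:ℂ)^2 + θ^2/4) :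
    ∃ ρ : ℝ, ρ < 0 ∧ ∃ C : ℝ, 0 < C ∧ ∃ w P E : ℂ → ℂ, ∀ z ∈ hStrip ρ,
      ‖(1 - w z ^ 2) - (1 - R^2 * sin (ν * z + κ)^2)‖ ≤ C * Real.exp z.re ∧
      1 - exp z ≠ 0 ∧ 1 - exp z * (1 - w z ^ 2) ≠ 0 ∧
      P z ^ 2 = (1 - exp z * (1 - w z ^ 2)) * (θ^2/4 + (1 - w z ^ 2) * E z) ∧
      HasDerivAt w (P z / (1 - exp z)) z ∧
      HasDerivAt P ((-E z * w z + exp z * (w z * (2 * (1 - w z ^ 2) * E z + θ^2/4)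
        - (1 - exp z) * (1 - w z ^ 2) * (P z + w z / 4) / (1 - exp z * (1 - w z ^ 2))))
          / (1 - exp z)) z := by
  have hν0 : (ν:ℂ) ≠ 0 := by exact_mod_cast hν
  set B := Real.exp (|ν| * Real.pi + |κ.im|) with hB
  obtain ⟨r, hr0, hr1, hr⟩ := exists_radius R B
  have hcd := fun p hp => cd_all R (ν:ℂ) θ (hr p hp).1 (hr p hp).2
  obtain ⟨L1, l1, g1⟩ := goodCoef_of ν κ r hr0 (fG1 R ν θ) (fun p hp => (hcd p hp).1)
  obtain ⟨L2, l2, g2⟩ := goodCoef_of ν κ r hr0 (fG2 R ν θ) (fun p hp => (hcd p hp).2.1)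
  obtain ⟨L3, l3, g3⟩ := goodCoef_of ν κ r hr0 (fG3 R ν θ) (fun p hp => (hcd p hp).2.2.1)
  obtain ⟨L4, l4, g4⟩ := goodCoef_of ν κ r hr0 (fJ1 R ν) (fun p hp => (hcd p hp).2.2.2.1)
  obtain ⟨L5, l5, g5⟩ := goodCoef_of ν κ r hr0 (fJ2 R ν) (fun p hp => (hcd p hp).2.2.2.2)
  obtain ⟨ρ, hρ, C, hC, a, b, e, hsol⟩ := exists_system (Real.log r) (L1 + L2 + L3 + L4 + L5)
    (by linarith) _ _ _ _ _ (g1.mono (by linarith)) (g2.mono (by linarith)) (g3.mono (by linarith))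
    (g4.mono (by linarith)) (g5.mono (by linarith))
  have hρ0 : ρ < 0 := hρ.trans_lt (Real.log_neg hr0 hr1)
  let p : ℂ → PSp := fun z => bpt ν κ z (a z, b z, e z)
  have hpK : ∀ z ∈ hStrip ρ, p z ∈ KSet r B := fun z hz =>
    bpt_mem ν κ r hr0 (hStrip_mono hρ hz) (hsol z hz).2.1
  obtain ⟨Lu, lu, -, hLu⟩ := KSet_bound r B (fu R) (fun p _ => (cd_fu R).contDiffAt)
  obtain ⟨LQ, lQ, -, hLQ⟩ := KSet_bound r B (fQ R ν θ) (fun p _ => (cd_fQ R ν θ).contDiffAt)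
  have hp0K : ∀ z ∈ hStrip ρ, ((0, cos (ν * z + κ), sin (ν * z + κ), 0) : PSp) ∈ KSet r B := by
    intro z hz
    have := hpK z hz
    exact ⟨by simpa using hr0.le, this.2.1, this.2.2.1, by simp⟩
  have hpd : ∀ z ∈ hStrip ρ, ‖p z - ((0, cos (ν * z + κ), sin (ν * z + κ), 0) : PSp)‖
      ≤ (1 + C) * Real.exp z.re := by
    intro z hz
    have h1 := (hsol z hz).1
    have h2 : ‖exp z‖ = Real.exp z.re := Complex.norm_exp z
    have h3 := Real.exp_pos z.re
    have h4 : 0 ≤ (1 + C) * Real.exp z.re := by positivity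
    simp only [p, bpt, Prod.mk_sub_mk, sub_zero, sub_self]
    refine norm_prod_le_iff.2 ⟨?_, norm_prod_le_iff.2 ⟨?_, norm_prod_le_iff.2 ⟨?_, ?_⟩⟩⟩
    · change ‖exp z‖ ≤ _
      rw [h2]; nlinarith
    · simpa using h4
    · simpa using h4
    · refine h1.trans ?_
      nlinarith
  -- derivatives
  have hder : ∀ z ∈ hStrip ρ,
      HasDerivAt (fun z => fw R (p z)) (fP R ν (p z) / (1 - exp z)) z ∧
      HasDerivAt (fun z => fP R ν (p z)) ((-fE ν (p z) * fw R (p z) + exp z * (fw R (p z) *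
        (2 * (1 - fw R (p z) ^ 2) * fE ν (p z) + θ^2/4)
        - (1 - exp z) * (1 - fw R (p z) ^ 2) * (fP R ν (p z) + fw R (p z) / 4) /
          (1 - exp z * (1 - fw R (p z) ^ 2)))) / (1 - exp z)) z ∧
      HasDerivAt (fun z => fE ν (p z)) (exp z * fG3 R ν θ (p z)) z := by
    intro z hz
    obtain ⟨-, -, ha, hb, he⟩ := hsol z hz
    have hx1 : 1 - exp z ≠ 0 := (hr _ (hpK z hz)).1
    have hq : fq R (p z) ≠ 0 := (hr _ (hpK z hz)).2
    have hlin : HasDerivAt (fun z : ℂ => (ν:ℂ) * z + κ) (ν:ℂ) z := by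
      simpa using ((hasDerivAt_id z).const_mul (ν:ℂ)).add_const κ
    have hc : HasDerivAt (fun z : ℂ => cos ((ν:ℂ) * z + κ)) (-sin (ν * z + κ) * ν) z := hlin.ccos
    have hs : HasDerivAt (fun z : ℂ => sin ((ν:ℂ) * z + κ)) (cos (ν * z + κ) * ν) z := hlin.csin
    have hcs : sin (ν * z + κ)^2 + cos (ν * z + κ)^2 = 1 := Complex.sin_sq_add_cos_sq _
    have hW : fw R (p z) = (R + b z) * sin (ν * z + κ) + a z * cos (ν * z + κ) := rfl
    have hP : fP R ν (p z) = ν * ((R + b z) * cos (ν * z + κ) - a z * sin (ν * z + κ)) := rfl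
    have hE : fE ν (p z) = ν^2 + e z := rfl
    have hu : fu R (p z) = 1 - fw R (p z)^2 := rfl
    have hqq : fq R (p z) = 1 - exp z * (1 - fw R (p z) ^ 2) := rfl
    have hg : fg (p z) = (1 - exp z)⁻¹ := rfl
    have hqi : fqi R (p z) = (fq R (p z))⁻¹ := rfl
    have hgx : fg (p z) * (1 - exp z) = 1 := by rw [hg]; field_simp
    refine ⟨?_, ?_, ?_⟩
    · convert! ((hb.const_add R).mul hs).add (ha.mul hc) using 1
      change _ = (e z * fJ2 R ν (p z) + exp z * fG2 R ν θ (p z)) * sin (ν * z + κ)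
        + (R + b z) * (cos (ν * z + κ) * ν) +
        ((e z * fJ1 R ν (p z) + exp z * fG1 R ν θ (p z)) * cos (ν * z + κ)
        + a z * (-sin (ν * z + κ) * ν))
      have h1 : fP R ν (p z) / (1 - exp z) = fP R ν (p z) + exp z * fg (p z) * fP R ν (p z) := by
        rw [hg]; field_simp; ring
      rw [h1]
      simp only [fJ1, fJ2, fG1, fG2]
      change _ = (e z * (-(cos (ν * z + κ) * (ν:ℂ)⁻¹ * fg (p z) * fw R (p z))) + exp z *
        (sin (ν * z + κ) * fg (p z) * fP R ν (p z) + cos (ν * z + κ) * (ν:ℂ)⁻¹ * fcore R ν θ (p z)))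
        * sin (ν * z + κ) + (R + b z) * (cos (ν * z + κ) * ν) +
        ((e z * (sin (ν * z + κ) * (ν:ℂ)⁻¹ * fg (p z) * fw R (p z)) + exp z *
        (cos (ν * z + κ) * fg (p z) * fP R ν (p z) - sin (ν * z + κ) * (ν:ℂ)⁻¹ * fcore R ν θ (p z)))
         * cos (ν * z + κ) + a z * (-sin (ν * z + κ) * ν))
      linear_combination hP - (exp z * fg (p z) * fP R ν (p z)) * hcs
    · convert! (((hb.const_add R).mul hc).sub (ha.mul hs)).const_mul (ν:ℂ) using 1
      change _ = (ν:ℂ) * ((e z * fJ2 R ν (p z) + exp z * fG2 R ν θ (p z)) * cos (ν * z + κ)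
        + (R + b z) * (-sin (ν * z + κ) * ν) -
        ((e z * fJ1 R ν (p z) + exp z * fG1 R ν θ (p z)) * sin (ν * z + κ)
        + a z * (cos (ν * z + κ) * ν)))
      have h1 : ((-fE ν (p z) * fw R (p z) + exp z * (fw R (p z) *
        (2 * (1 - fw R (p z) ^ 2) * fE ν (p z) + θ^2/4)
        - (1 - exp z) * (1 - fw R (p z) ^ 2) * (fP R ν (p z) + fw R (p z) / 4) /
          (1 - exp z * (1 - fw R (p z) ^ 2)))) / (1 - exp z)) =
          -ν^2 * fw R (p z) - e z * fg (p z) * fw R (p z) + exp z * fcore R ν θ (p z) := by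
        simp only [fcore]
        rw [hqi, ← hqq, ← hu, hE, hg]
        field_simp
        ring
      rw [h1]
      simp only [fJ1, fJ2, fG1, fG2]
      change _ = (ν:ℂ) * ((e z * (-(cos (ν * z + κ) * (ν:ℂ)⁻¹ * fg (p z) * fw R (p z))) + exp z *
        (sin (ν * z + κ) * fg (p z) * fP R ν (p z) + cos (ν * z + κ) * (ν:ℂ)⁻¹ * fcore R ν θ (p z)))
        * cos (ν * z + κ) + (R + b z) * (-sin (ν * z + κ) * ν) -
        ((e z * (sin (ν * z + κ) * (ν:ℂ)⁻¹ * fg (p z) * fw R (p z)) + exp z *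
        (cos (ν * z + κ) * fg (p z) * fP R ν (p z) - sin (ν * z + κ) * (ν:ℂ)⁻¹ * fcore R ν θ (p z)))
         * sin (ν * z + κ) + a z * (cos (ν * z + κ) * ν)))
      have hνi : (ν:ℂ) * (ν:ℂ)⁻¹ = 1 := mul_inv_cancel₀ hν0
      have hcs' : ((ν:ℂ) * (ν:ℂ)⁻¹) * (sin (ν * z + κ)^2 + cos (ν * z + κ)^2) = 1 := by
        rw [hνi, hcs, one_mul]
      linear_combination (-(ν:ℂ)^2) * hW
        + (e z * fg (p z) * fw R (p z) - exp z * fcore R ν θ (p z)) * hcs'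
    · exact he.const_add ((ν:ℂ)^2)
  have hQd : ∀ z ∈ hStrip ρ, HasDerivAt (fun z => fQ R ν θ (p z)) 0 z := by
    intro z hz
    obtain ⟨dw, dP, dE⟩ := hder z hz
    have hx1 : 1 - exp z ≠ 0 := (hr _ (hpK z hz)).1
    have hq : fq R (p z) ≠ 0 := (hr _ (hpK z hz)).2
    have hqq : fq R (p z) = 1 - exp z * (1 - fw R (p z) ^ 2) := rfl
    have hqi : fqi R (p z) = (fq R (p z))⁻¹ := rfl
    have du : HasDerivAt (fun z => fu R (p z)) _ z := (dw.pow 2).const_sub 1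
    have dq : HasDerivAt (fun z => fq R (p z)) _ z :=
      ((Complex.hasDerivAt_exp z).mul du).const_sub 1
    have dQ : HasDerivAt (fun z => fQ R ν θ (p z)) _ z :=
      (dP.pow 2).sub (dq.mul ((du.mul dE).const_add (θ^2/4)))
    convert! dQ using 1
    have hu : fu R (p z) = 1 - fw R (p z)^2 := rfl
    simp only [fG3, hqi]
    rw [hqq] at hq ⊢
    rw [hu]
    generalize fw R (p z) = w at *
    generalize fP R ν (p z) = P at *
    generalize fE ν (p z) = E at *
    generalize exp z = x at *
    push_cast
    field_simp
    ring
  have hQ0 : ∀ z ∈ hStrip ρ, fQ R ν θ (p z) = 0 := by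
    intro z hz
    have hconst : ∀ n : ℕ, fQ R ν θ (p (z + ((-(n:ℝ):ℝ):ℂ))) = fQ R ν θ (p z) := by
      intro n
      have hz' := hStrip_left ρ z hz (-(n:ℝ)) (by simp)
      exact (hStrip_open ρ).is_const_of_deriv_eq_zero (hStrip_convex ρ).isPreconnected
        (fun z hz => (hQd z hz).differentiableAt.differentiableWithinAt)
        (fun z hz => (hQd z hz).deriv) hz' hz
    have hbound : ∀ n : ℕ, ‖fQ R ν θ (p z)‖ ≤ LQ * ((1 + C) * (Real.exp z.re * Real.exp (-(n:ℝ)))) := by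
      intro n
      have hz' := hStrip_left ρ z hz (-(n:ℝ)) (by simp)
      rw [← hconst n]
      set z' := z + ((-(n:ℝ):ℝ):ℂ) with hz'def
      have h1 := hLQ _ (hpK z' hz') _ (hp0K z' hz')
      have h2 : fQ R ν θ ((0, cos (ν * z' + κ), sin (ν * z' + κ), 0) : PSp) = 0 := by
        have hcs : sin (ν * z' + κ)^2 + cos (ν * z' + κ)^2 = 1 := Complex.sin_sq_add_cos_sq _
        simp only [fQ, fq, fu, fP, fw, fE, Prod.fst_zero, Prod.snd_zero]
        linear_combination (R^2 * (ν:ℂ)^2) * hcs + hR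
      rw [h2, sub_zero] at h1
      refine h1.trans (mul_le_mul_of_nonneg_left ?_ (by linarith))
      have h3 := hpd z' hz'
      have h4 : z'.re = z.re + -(n:ℝ) := by rw [hz'def, Complex.add_re, Complex.ofReal_re]
      rw [h4, Real.exp_add] at h3
      exact h3
    have hlim : Tendsto (fun n : ℕ => LQ * ((1 + C) * (Real.exp z.re * Real.exp (-(n:ℝ))))) atTop
        (𝓝 0) := by
      have h1 : Tendsto (fun n : ℕ => Real.exp (-(n:ℝ))) atTop (𝓝 0) :=
        Real.tendsto_exp_neg_atTop_nhds_zero.comp tendsto_natCast_atTop_atTop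
      simpa using ((h1.const_mul (Real.exp z.re)).const_mul (1 + C)).const_mul LQ
    have := ge_of_tendsto' hlim hbound
    simpa using this
  refine ⟨ρ, hρ0, Lu * (1 + C), by positivity, fun z => fw R (p z), fun z => fP R ν (p z),
    fun z => fE ν (p z), fun z hz => ?_⟩
  refine ⟨?_, (hr _ (hpK z hz)).1, (hr _ (hpK z hz)).2, ?_, (hder z hz).1, (hder z hz).2.1⟩
  · have h1 := hLu _ (hpK z hz) _ (hp0K z hz)
    have h2 : fu R ((0, cos (ν * z + κ), sin (ν * z + κ), 0) : PSp)
        = 1 - R^2 * sin (ν * z + κ)^2 := by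
      simp only [fu, fw, Prod.fst_zero, Prod.snd_zero]; ring
    rw [h2] at h1
    refine h1.trans ?_
    rw [mul_assoc]
    exact mul_le_mul_of_nonneg_left (hpd z hz) (by linarith)
  · exact sub_eq_zero.1 (hQ0 z hz)

end Sol

/-- the final algebraic identity -/
theorem pvi_algebra (x W P E θ u q : ℂ) (hu : u = 1 - W^2) (hq : q = 1 - x * u)
    (hx : x ≠ 0) (hx1 : 1 - x ≠ 0) (hu0 : u ≠ 0) (hW : W ≠ 0) (hq0 : q ≠ 0)
    (hQ : P^2 = q * (θ^2/4 + u * E)) (y y' y'' : ℂ) (hy : y = 1 / u)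
    (hy' : y' = 2 * W * P / (x * (1 - x) * u^2))
    (W' P' u' : ℂ) (hW' : W' = P / (x * (1 - x)))
    (hP' : P' = (-E * W + x * (W * (2 * u * E + θ^2/4) - (1 - x) * u * (P + W/4) / q))
      / (x * (1 - x)))
    (hu' : u' = - 2 * W * P / (x * (1 - x)))
    (hy'' : y'' = 2 * (W' * P + W * P') / (x * (1 - x) * u^2)
      - 2 * W * P * ((1 - 2 * x) * u^2 + x * (1 - x) * (2 * u * u'))
        / (x * (1 - x) * u^2)^2) :
    y'' = (1/2) * (1/y + 1/(y - 1) + 1/(y - x)) * y'^2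
      - (1/x + 1/(x - 1) + 1/(y - x)) * y'
      + (1/2) * (y * (y - 1) * (y - x) / (x^2 * (x - 1)^2)) * (θ^2 + x*(x - 1)/(y - x)^2) := by
  have e1 : y - 1 = W^2 / u := by rw [hy]; field_simp; rw [hu]; ring
  have e2 : y - x = q / u := by rw [hy, hq]; field_simp
  have e3 : x - 1 = -(1 - x) := by ring
  have hE : E = (P^2 / q - θ^2/4) / u := by rw [hQ]; field_simp; ring
  rw [e1, e2, e3, hy'', hy', hy, hu', hW', hP', hE]
  set t := 1 - x with ht
  have hxt : x = 1 - t := by rw [ht]; ring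
  field_simp
  rw [hq, hxt, hu]
  ring

/-- existence of a branch of a `PVI_μ` transcendent with the oscillatory
critical behaviour `1/y(x) = 1 − ((4ν²+(2μ−1)²)/(4ν²))·sin²(ν·Log x + φ/2 − π/4) + O(x)`
on a slit punctured disk `D = {0 < |x| < ε, |arg x| < π}`: there are `ε ∈ (0,1)`, `C > 0`
and `u` holomorphic on `D` with the stated bound, such that wherever `u(x) ∉ {0, 1, 1/x}`
the function `y = 1/u` is twice complex-differentiable near `x` and satisfies `PVI_μ`. -/
theorem stmt_19 (μ : ℂ) (ν : ℝ) (hν : ν ≠ 0) (φ : ℂ)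
    (h1 : 2*μ - 1 ≠ 2*I*(ν:ℂ)) (h2 : 2*μ - 1 ≠ -(2*I*(ν:ℂ))) :
    ∃ ε : ℝ, 0 < ε ∧ ε < 1 ∧ ∃ C : ℝ, 0 < C ∧ ∃ u : ℂ → ℂ,
      DifferentiableOn ℂ u {x : ℂ | 0 < ‖x‖ ∧ ‖x‖ < ε ∧ |Complex.arg x| < Real.pi} ∧
      (∀ x ∈ {x : ℂ | 0 < ‖x‖ ∧ ‖x‖ < ε ∧ |Complex.arg x| < Real.pi},
        ‖u x - (1 - (4*(ν:ℂ)^2 + (2*μ - 1)^2) / (4*(ν:ℂ)^2) *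
          (Complex.sin ((ν:ℂ) * Complex.log x + φ/2 - (Real.pi:ℂ)/4))^2)‖ ≤ C * ‖x‖) ∧
      (∀ x ∈ {x : ℂ | 0 < ‖x‖ ∧ ‖x‖ < ε ∧ |Complex.arg x| < Real.pi},
        u x ≠ 0 → u x ≠ 1 → u x ≠ 1/x →
        (∀ᶠ z in nhds x, DifferentiableAt ℂ (fun s => 1 / u s) z ∧
          DifferentiableAt ℂ (deriv (fun s => 1 / u s)) z) ∧
        deriv (deriv (fun s => 1 / u s)) x =
          (1/2) * (1/(1/u x) + 1/(1/u x - 1) + 1/(1/u x - x)) *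
              (deriv (fun s => 1 / u s) x)^2
            - (1/x + 1/(x - 1) + 1/(1/u x - x)) * deriv (fun s => 1 / u s) x
            + (1/2) * ((1/u x) * (1/u x - 1) * (1/u x - x) / (x^2 * (x - 1)^2)) *
                ((2*μ - 1)^2 + x*(x - 1)/(1/u x - x)^2)) := by
  set θ : ℂ := 2*μ - 1 with hθ
  set D : Set ℂ := {x : ℂ | 0 < ‖x‖ ∧ ‖x‖ < Real.exp 0 ∧ |Complex.arg x| < Real.pi} with hD0
  have hν0 : (ν:ℂ) ≠ 0 := by exact_mod_cast hν
  obtain ⟨R, hR⟩ := IsAlgClosed.exists_pow_nat_eq ((4*(ν:ℂ)^2 + θ^2) / (4*(ν:ℂ)^2))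
    (n := 2) (by norm_num)
  obtain ⟨ρ, hρ, C, hC, w, P, E, hsol⟩ := exists_sol R θ (φ/2 - (Real.pi:ℂ)/4) ν hν
    (by rw [hR]; field_simp)
  refine ⟨Real.exp ρ, Real.exp_pos ρ, by simpa using hρ, C, hC, fun x => 1 - w (log x)^2, ?_⟩
  clear hD0 D
  set D : Set ℂ := {x : ℂ | 0 < ‖x‖ ∧ ‖x‖ < Real.exp ρ ∧ |Complex.arg x| < Real.pi} with hD
  have hDx : ∀ x ∈ D, x ≠ 0 := fun x hx => norm_pos_iff.1 hx.1
  have hDslit : ∀ x ∈ D, x ∈ slitPlane := by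
    intro x hx
    refine mem_slitPlane_iff_arg.2 ⟨fun h => ?_, hDx x hx⟩
    have h3 := hx.2.2
    rw [h, abs_of_pos Real.pi_pos] at h3
    exact lt_irrefl _ h3
  have hDlog : ∀ x ∈ D, log x ∈ hStrip ρ := by
    intro x hx
    refine ⟨?_, ?_⟩
    · rw [Complex.log_re]
      exact (Real.log_lt_iff_lt_exp hx.1).2 hx.2.1
    · rw [Complex.log_im]
      exact hx.2.2
  have hDopen : IsOpen D := by
    have h : D = slitPlane ∩ Metric.ball 0 (Real.exp ρ) := by
      ext x
      constructor
      · intro hx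
        exact ⟨hDslit x hx, by simpa using hx.2.1⟩
      · rintro ⟨h1, h2⟩
        have h3 := mem_slitPlane_iff_arg.1 h1
        refine ⟨norm_pos_iff.2 h3.2, by simpa using h2, ?_⟩
        rw [abs_lt]
        exact ⟨Complex.neg_pi_lt_arg x, lt_of_le_of_ne (Complex.arg_le_pi x) h3.1⟩
    rw [h]
    exact isOpen_slitPlane.inter Metric.isOpen_ball
  have hex : ∀ x ∈ D, exp (log x) = x := fun x hx => Complex.exp_log (hDx x hx)
  have hw : ∀ x ∈ D, HasDerivAt (fun x => w (log x)) (P (log x) / (x * (1 - x))) x := by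
    intro x hx
    have h3 := (hsol _ (hDlog x hx)).2.2.2.2.1.comp x (Complex.hasDerivAt_log (hDslit x hx))
    rw [hex x hx] at h3
    convert! h3 using 1
    rw [div_mul_eq_div_div, div_eq_mul_inv, div_eq_mul_inv, div_eq_mul_inv]
    ring
  have hP : ∀ x ∈ D, HasDerivAt (fun x => P (log x))
      ((-E (log x) * w (log x) + x * (w (log x) * (2 * (1 - w (log x) ^ 2) * E (log x) + θ^2/4)
        - (1 - x) * (1 - w (log x) ^ 2) * (P (log x) + w (log x) / 4)
          / (1 - x * (1 - w (log x) ^ 2)))) / (x * (1 - x))) x := by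
    intro x hx
    have h3 := (hsol _ (hDlog x hx)).2.2.2.2.2.comp x (Complex.hasDerivAt_log (hDslit x hx))
    rw [hex x hx] at h3
    convert! h3 using 1
    rw [mul_comm x (1 - x), ← div_div, div_eq_mul_inv _ x]
  have hu : ∀ x ∈ D, HasDerivAt (fun x => 1 - w (log x)^2)
      (- 2 * w (log x) * P (log x) / (x * (1 - x))) x := by
    intro x hx
    convert! ((hw x hx).pow 2).const_sub 1 using 1
    push_cast
    ring
  have hudiff : DifferentiableOn ℂ (fun x => 1 - w (log x)^2) D :=
    fun x hx => (hu x hx).differentiableAt.differentiableWithinAt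
  refine ⟨hudiff, ?_, ?_⟩
  · intro x hx
    have h3 := (hsol _ (hDlog x hx)).1
    rw [hR, Complex.log_re, Real.exp_log hx.1, ← add_sub_assoc] at h3
    exact h3
  · intro x hx hu0 hu1 _
    have hev : ∀ᶠ z in nhds x, z ∈ D ∧ 1 - w (log z)^2 ≠ 0 :=
      (hDopen.eventually_mem hx).and
        ((hu x hx).continuousAt.eventually_ne hu0)
    have hdy : ∀ z, z ∈ D → 1 - w (log z)^2 ≠ 0 →
        HasDerivAt (fun s => 1 / (1 - w (log s)^2))
          (2 * w (log z) * P (log z) / (z * (1 - z) * (1 - w (log z)^2)^2)) z := by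
      intro z hz hz0
      have h3 := (hu z hz).inv hz0
      simp only [one_div]
      convert! h3 using 1
      rw [← div_div]
      ring
    have hdev : deriv (fun s => 1 / (1 - w (log s)^2)) =ᶠ[nhds x]
        fun z => 2 * w (log z) * P (log z) / (z * (1 - z) * (1 - w (log z)^2)^2) := by
      filter_upwards [hev] with z hz
      exact (hdy z hz.1 hz.2).deriv
    have hx0 : x ≠ 0 := hDx x hx
    have hx1 : 1 - x ≠ 0 := by
      have h3 := (hsol _ (hDlog x hx)).2.1
      rwa [hex x hx] at h3
    have hq0 : 1 - x * (1 - w (log x)^2) ≠ 0 := by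
      have h3 := (hsol _ (hDlog x hx)).2.2.1
      rwa [hex x hx] at h3
    have hQ := (hsol _ (hDlog x hx)).2.2.2.1
    rw [hex x hx] at hQ
    have hW0 : w (log x) ≠ 0 := by
      intro h
      apply hu1
      simp [h]
    refine ⟨?_, ?_⟩
    · have hO : IsOpen {z | z ∈ D ∧ 1 - w (log z)^2 ≠ 0} := by
        rw [isOpen_iff_mem_nhds]
        rintro z ⟨hz, hz0⟩
        exact (hDopen.eventually_mem hz).and ((hu z hz).continuousAt.eventually_ne hz0)
      have hdo : DifferentiableOn ℂ (fun s => 1 / (1 - w (log s)^2))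
          {z | z ∈ D ∧ 1 - w (log z)^2 ≠ 0} :=
        fun z hz => (hdy z hz.1 hz.2).differentiableAt.differentiableWithinAt
      have hdo' := hdo.deriv hO
      filter_upwards [hev] with z hz
      exact ⟨hdo.differentiableAt (hO.mem_nhds hz), hdo'.differentiableAt (hO.mem_nhds hz)⟩
    · have hden : HasDerivAt (fun z => z * (1 - z) * (1 - w (log z)^2)^2)
          ((1 - 2 * x) * (1 - w (log x)^2)^2 + x * (1 - x) * (2 * (1 - w (log x)^2) *
            (- 2 * w (log x) * P (log x) / (x * (1 - x))))) x := by
        have h3 : HasDerivAt (fun z : ℂ => z * (1 - z)) (1 - 2 * x) x := by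
          convert! (hasDerivAt_id x).mul ((hasDerivAt_id x).const_sub 1) using 1
          simp only [id]; ring
        convert! h3.mul ((hu x hx).pow 2) using 1
        simp only [Pi.pow_apply]
        push_cast
        ring
      have hnum : HasDerivAt (fun z => 2 * w (log z) * P (log z)) _ x :=
        ((hw x hx).const_mul 2).mul (hP x hx)
      have h2d := hnum.div hden (by
        exact mul_ne_zero (mul_ne_zero hx0 hx1) (pow_ne_zero 2 hu0))
      rw [(hdy x hx hu0).deriv]
      refine pvi_algebra x (w (log x)) (P (log x)) (E (log x)) θ _ _ rfl rfl hx0 hx1 hu0 hW0 hq0 hQ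
        _ _ _ rfl rfl _ _ _ rfl rfl rfl ?_
      rw [hdev.deriv_eq]
      refine (h2d.deriv).trans ?_
      rw [sub_div]
      have hdn : x * (1 - x) * (1 - w (log x)^2)^2 ≠ 0 :=
        mul_ne_zero (mul_ne_zero hx0 hx1) (pow_ne_zero 2 hu0)
      congr 1
      rw [sq (x * (1 - x) * (1 - w (log x)^2)^2), mul_div_mul_right _ _ hdn]
      ring
end
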